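/- Let a_□(n) be the number of well-rounded sublattices of index n in the square lattice ℤ[i]. For every real s > 1, the Dirichlet series Φ_{□,wr}(s) = ∑_{n≥1} a_□(n) n^{−s} converges and satisfies the strict inequalities D_□(s) − ζ(s)·L(s,χ₋₄) < Φ_{□,wr}(s) < D_□(s) + ζ(s)·L(s,χ₋₄), where D_□(s) = ((2 + 2^s)/(1 + 2^s)) · ((1 − 3^{(1−s)/2})/(s − 1)) · (L(s,χ₋₄)/ζ(2s)) · ζ(s) · ζ(2s−1). -/

import Mathlib

noncomputable section

open Filter

/-- A subgroup `Λ` of `ℂ ≅ ℝ²` is well-rounded if it contains two `ℝ`-linearly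
independent vectors, both of minimal norm among the nonzero elements of `Λ`. -/
def IsWellRounded (Λ : AddSubgroup ℂ) : Prop :=
  ∃ x y : ℂ, x ∈ Λ ∧ y ∈ Λ ∧ LinearIndependent ℝ ![x, y] ∧
    (∀ z ∈ Λ, z ≠ 0 → ‖x‖ ≤ ‖z‖) ∧ (∀ z ∈ Λ, z ≠ 0 → ‖y‖ ≤ ‖z‖)

/-- The square lattice, realised as the Gaussian integers `ℤ[i] = ℤ + ℤi ⊂ ℂ`. -/
def squareLattice : AddSubgroup ℂ := AddSubgroup.closure {1, Complex.I}

/-- `aSquare n` is the number of well-rounded sublattices of index `n` in the square lattice. -/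
def aSquare (n : ℕ) : ℕ :=
  Nat.card {Λ : AddSubgroup ℂ // Λ ≤ squareLattice ∧ IsWellRounded Λ ∧
    (Λ.addSubgroupOf squareLattice).index = n}

/-- The Dirichlet character mod 4 usually denoted `χ₋₄`. -/
def chiFour (n : ℕ) : ℝ := if n % 4 = 1 then 1 else if n % 4 = 3 then -1 else 0

/-- The L-series `L(s, χ₋₄)` for real `s`. -/
def LFour (s : ℝ) : ℝ := ∑' n : ℕ, chiFour n * (n : ℝ) ^ (-s)

/-- The Riemann zeta function for real `s > 1`, as a real series
(the term `n = 0` vanishes since `(0:ℝ)^(-s) = 0` for `s ≠ 0`). -/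
def zetaReal (s : ℝ) : ℝ := ∑' n : ℕ, (n : ℝ) ^ (-s)

/-- The comparison function `D_□(s)`. -/
def DSquare (s : ℝ) : ℝ :=
  ((2 + 2 ^ s) / (1 + 2 ^ s)) * ((1 - 3 ^ ((1 - s) / 2)) / (s - 1)) *
    (LFour s / zetaReal (2 * s)) * zetaReal s * zetaReal (2 * s - 1)

/-!
A well-rounded sublattice of `ℤ[i]` is spanned by two minimal vectors `x` and `y` of equal length,
so `x + y` and `x - y` are orthogonal: they are `a * π` and `b * i * π` for a primitive `π`, unique
once it is rotated into the first quadrant. Minimality says `1 / √3 ≤ a / b ≤ √3`, where equality is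
impossible, and the index is `a * b * N(π) / 2`. Integrality of the sides means that `a` and `b` are
both even if `N(π)` is odd, and of equal parity if `N(π)` is even. Hence the Dirichlet series is
`P * (2 ^ (-s) * S₁ + S₂)`, where `P` is the sum of `N(π) ^ (-s)` over the `π` of odd norm and `S_k`
the sum of `(a * b) ^ (-s)` over the pairs `a ≡ b [MOD k]` in the sector.

There are as many primitive `π` of norm `n` up to units as square roots of `-1` modulo `n`, which
gives `P * (1 + 2 ^ (-s)) = ζ(s) * L(s, χ₋₄) / ζ(2 * s)`.
The diagonal contributes `ζ(2 * s)` to `S_k`; on each column `a` of the rest of the sector one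
compares the sum of `b ^ (-s)` with an integral from `a` to `√3 * a`, with an error below the first
term. This gives `S_k` up to an error of less than `ζ(2 * s)`, and both bounds follow.
-/

/-! ### Sums over a sector -/

section SectorSums

variable {s : ℝ}

lemma mul_sum_le_integral_of_antitoneOn {f : ℝ → ℝ} {a k : ℝ} (M : ℕ) (hk : 0 ≤ k)
    (hf : AntitoneOn f (Set.Icc a (a + k * M))) :
    k * ∑ j ∈ Finset.range M, f (a + k * (j + 1 : ℕ)) ≤ ∫ t in a..a + k * M, f t := by
  have hg : AntitoneOn (fun u ↦ f (a + k * u)) (Set.Icc 0 (0 + (M : ℝ))) := by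
    intro u hu v hv huv
    rw [zero_add] at hu hv
    refine hf ⟨?_, ?_⟩ ⟨?_, ?_⟩ ?_ <;>
      first | gcongr <;> linarith [hu.2, hv.2] | nlinarith [hu.1, hv.1]
  have h := mul_le_mul_of_nonneg_left hg.sum_le_integral hk
  simpa only [zero_add, mul_zero, add_zero,
    intervalIntegral.mul_integral_comp_add_mul (f := f)] using h

lemma integral_le_mul_sum_of_antitoneOn {f : ℝ → ℝ} {a k : ℝ} (M : ℕ) (hk : 0 ≤ k)
    (hf : AntitoneOn f (Set.Icc a (a + k * M))) :
    ∫ t in a..a + k * M, f t ≤ k * ∑ j ∈ Finset.range M, f (a + k * j) := by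
  have hg : AntitoneOn (fun u ↦ f (a + k * u)) (Set.Icc 0 (0 + (M : ℝ))) := by
    intro u hu v hv huv
    rw [zero_add] at hu hv
    refine hf ⟨?_, ?_⟩ ⟨?_, ?_⟩ ?_ <;>
      first | gcongr <;> linarith [hu.2, hv.2] | nlinarith [hu.1, hv.1]
  have h := mul_le_mul_of_nonneg_left hg.integral_le_sum hk
  simpa only [zero_add, mul_zero, add_zero,
    intervalIntegral.mul_integral_comp_add_mul (f := f)] using h

/-- The integral `∫ t^(-s)` over the range `1 < t < √3` of slopes of a sector. -/
def sectorIntegral (s : ℝ) : ℝ := ∫ t in (1 : ℝ)..√3, t ^ (-s)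

lemma one_lt_sqrt_three : 1 < √3 := Real.lt_sqrt_of_sq_lt (by norm_num)

lemma sqrt_three_lt_two : √3 < 2 := (Real.sqrt_lt' two_pos).2 (by norm_num)

lemma intervalIntegrable_rpow_of_pos {a b : ℝ} (ha : 0 < a) (hb : 0 < b) :
    IntervalIntegrable (fun t : ℝ ↦ t ^ (-s)) MeasureTheory.volume a b :=
  intervalIntegral.intervalIntegrable_rpow (.inr (Set.notMem_uIcc_of_lt ha hb))

lemma sectorIntegral_eq (hs : s ≠ 1) : sectorIntegral s = (1 - 3 ^ ((1 - s) / 2)) / (s - 1) := by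
  have h0 : (0 : ℝ) ∉ Set.uIcc 1 √3 := Set.notMem_uIcc_of_lt one_pos (by positivity)
  rw [sectorIntegral, integral_rpow (.inr ⟨by contrapose! hs; linarith, h0⟩), Real.one_rpow,
    Real.sqrt_eq_rpow, ← Real.rpow_mul (by norm_num), ← neg_div_neg_eq]
  ring_nf

lemma sectorIntegral_pos : 0 < sectorIntegral s :=
  intervalIntegral.intervalIntegral_pos_of_pos_on
    (intervalIntegrable_rpow_of_pos one_pos (by positivity))
    (fun _ ht ↦ Real.rpow_pos_of_pos (one_pos.trans ht.1) _) one_lt_sqrt_three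

lemma sectorIntegral_lt_one (hs : 0 ≤ s) : sectorIntegral s < 1 := by
  have h : sectorIntegral s ≤ ∫ _ in (1 : ℝ)..√3, (1 : ℝ) :=
    intervalIntegral.integral_mono_on one_lt_sqrt_three.le
      (intervalIntegrable_rpow_of_pos one_pos (by positivity)) (by simp)
      fun t ht ↦ Real.rpow_le_one_of_one_le_of_nonpos ht.1 (by linarith)
  rw [intervalIntegral.integral_const, smul_eq_mul, mul_one] at h
  linarith [sqrt_three_lt_two]

lemma integral_rpow_sqrt_three_mul {a : ℝ} (ha : 0 < a) :
    ∫ t in a..√3 * a, t ^ (-s) = sectorIntegral s * a ^ (1 - s) := by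
  have h : ∫ t in (1 : ℝ)..√3, (t * a) ^ (-s) = sectorIntegral s * a ^ (-s) := by
    rw [sectorIntegral, ← intervalIntegral.integral_mul_const]
    refine intervalIntegral.integral_congr fun t ht ↦ ?_
    rw [Set.uIcc_of_le one_lt_sqrt_three.le] at ht
    exact Real.mul_rpow (by linarith [ht.1]) ha.le
  rw [sub_eq_add_neg, Real.rpow_add ha, Real.rpow_one, mul_left_comm, ← h,
    intervalIntegral.mul_integral_comp_mul_right (f := fun t : ℝ ↦ t ^ (-s)), one_mul]

/-- The number of lattice steps of length `k` that fit strictly between `a` and `√3 a`. -/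
def sectorSteps (k a : ℕ) : ℕ := ⌊(√3 - 1) * a / k⌋₊

lemma sq_ne_three_mul_sq {a b : ℕ} (ha : 0 < a) : b ^ 2 ≠ 3 * a ^ 2 := by
  intro h
  refine Nat.prime_three.irrational_sqrt ⟨b / a, ?_⟩
  rw [eq_comm, Nat.cast_ofNat, Real.sqrt_eq_iff_mul_self_eq (by norm_num) (by positivity)]
  have : (b : ℝ) ^ 2 = 3 * a ^ 2 := by exact_mod_cast h
  push_cast
  field_simp
  linarith

lemma le_sectorSteps_iff_le_sqrt_three_mul {k a j : ℕ} (hk : 0 < k) :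
    j ≤ sectorSteps k a ↔ (a : ℝ) + k * j ≤ √3 * a := by
  have := one_lt_sqrt_three
  rw [sectorSteps, Nat.le_floor_iff (by positivity), le_div_iff₀ (by positivity)]
  constructor <;> intro h <;> linarith

lemma le_sectorSteps_iff {k a j : ℕ} (hk : 0 < k) (ha : 0 < a) :
    j ≤ sectorSteps k a ↔ (a + k * j) ^ 2 < 3 * a ^ 2 := by
  rw [le_sectorSteps_iff_le_sqrt_three_mul hk, ← pow_le_pow_iff_left₀ (by positivity)
    (by positivity) two_ne_zero, mul_pow, Real.sq_sqrt (by norm_num)]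
  norm_cast
  rw [le_iff_lt_or_eq, or_iff_left (sq_ne_three_mul_sq ha)]

lemma sectorSteps_one {k : ℕ} (hk : 0 < k) : sectorSteps k 1 = 0 := by
  rw [← Nat.lt_one_iff, ← not_le, le_sectorSteps_iff hk one_pos]
  nlinarith

/-- The part of the column over `a` of a sector sum that lies above the diagonal. -/
def columnSum (s : ℝ) (k a : ℕ) : ℝ :=
  ∑ j ∈ Finset.range (sectorSteps k a), ((a : ℝ) + k * (j + 1 : ℕ)) ^ (-s)

lemma antitoneOn_rpow_neg (hs : 0 ≤ s) {a b : ℝ} (ha : 0 < a) :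
    AntitoneOn (fun t : ℝ ↦ t ^ (-s)) (Set.Icc a b) := fun _ hu _ _ huv ↦
  Real.rpow_le_rpow_of_nonpos (ha.trans_le hu.1) huv (by linarith)

lemma mul_columnSum_le (hs : 0 ≤ s) {k a : ℕ} (hk : 0 < k) (ha : 0 < a) :
    k * columnSum s k a ≤ sectorIntegral s * (a : ℝ) ^ (1 - s) := by
  have ha' : (0 : ℝ) < a := by exact_mod_cast ha
  have hM : (a : ℝ) + k * sectorSteps k a ≤ √3 * a :=
    (le_sectorSteps_iff_le_sqrt_three_mul hk).1 le_rfl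
  calc (k : ℝ) * columnSum s k a
      ≤ ∫ t in (a : ℝ)..a + k * sectorSteps k a, t ^ (-s) :=
        mul_sum_le_integral_of_antitoneOn _ k.cast_nonneg (antitoneOn_rpow_neg hs ha')
    _ ≤ ∫ t in (a : ℝ)..√3 * a, t ^ (-s) :=
        intervalIntegral.integral_mono_interval le_rfl (le_add_of_nonneg_right (by positivity)) hM
          (MeasureTheory.ae_restrict_of_forall_mem measurableSet_Ioc fun t ht ↦
            (Real.rpow_pos_of_pos (ha'.trans ht.1) _).le)
          (intervalIntegrable_rpow_of_pos ha' (by positivity))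
    _ = _ := integral_rpow_sqrt_three_mul ha'

lemma le_mul_columnSum (hs : 0 ≤ s) {k a : ℕ} (hk : 0 < k) (ha : 0 < a) :
    sectorIntegral s * (a : ℝ) ^ (1 - s) - k * (a : ℝ) ^ (-s) ≤ k * columnSum s k a := by
  have ha' : (0 : ℝ) < a := by exact_mod_cast ha
  have hM : √3 * a ≤ (a : ℝ) + k * (sectorSteps k a + 1 : ℕ) :=
    (not_le.1 fun h ↦ (Nat.lt_succ_self _).not_ge
      ((le_sectorSteps_iff_le_sqrt_three_mul hk).2 h)).le
  rw [sub_le_iff_le_add]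
  calc sectorIntegral s * (a : ℝ) ^ (1 - s) = ∫ t in (a : ℝ)..√3 * a, t ^ (-s) :=
        (integral_rpow_sqrt_three_mul ha').symm
    _ ≤ ∫ t in (a : ℝ)..a + k * (sectorSteps k a + 1 : ℕ), t ^ (-s) :=
        intervalIntegral.integral_mono_interval le_rfl
          (le_mul_of_one_le_left ha'.le one_lt_sqrt_three.le) hM
          (MeasureTheory.ae_restrict_of_forall_mem measurableSet_Ioc fun t ht ↦
            (Real.rpow_pos_of_pos (ha'.trans ht.1) _).le)
          (intervalIntegrable_rpow_of_pos ha' (by positivity))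
    _ ≤ k * ∑ j ∈ Finset.range (sectorSteps k a + 1), ((a : ℝ) + k * j) ^ (-s) :=
        integral_le_mul_sum_of_antitoneOn _ k.cast_nonneg (antitoneOn_rpow_neg hs ha')
    _ = k * columnSum s k a + k * (a : ℝ) ^ (-s) := by
        rw [Finset.sum_range_succ', Nat.cast_zero, mul_zero, add_zero, mul_add, columnSum]

/-- The pairs of positive integers, congruent modulo `k`, whose ratio lies strictly between
`1` and `√3`. -/
def lowerSector (k : ℕ) : Set (ℕ × ℕ) :=
  {q | 0 < q.1 ∧ q.1 < q.2 ∧ q.2 ^ 2 < 3 * q.1 ^ 2 ∧ q.1 ≡ q.2 [MOD k]}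

/-- The pairs of positive integers, congruent modulo `k`, whose ratio lies strictly between
`1/√3` and `√3`. -/
def sector (k : ℕ) : Set (ℕ × ℕ) :=
  {q | 0 < q.1 ∧ 0 < q.2 ∧ q.1 ^ 2 < 3 * q.2 ^ 2 ∧ q.2 ^ 2 < 3 * q.1 ^ 2 ∧ q.1 ≡ q.2 [MOD k]}

/-- Columnwise enumeration of `lowerSector k`. -/
def lowerSectorEquiv {k : ℕ} (hk : 0 < k) :
    (Σ a : ℕ, Fin (sectorSteps k a)) ≃ lowerSector k :=
  Equiv.ofBijective
    (fun p ↦ ⟨(p.1, p.1 + k * (p.2 + 1)), by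
      have ha : 0 < p.1 := by
        by_contra! h0
        have := p.2.2
        simp [Nat.le_zero.1 h0, sectorSteps] at this
      exact ⟨ha, Nat.lt_add_of_pos_right (by positivity), (le_sectorSteps_iff hk ha).1 p.2.2,
        (Nat.modEq_iff_dvd' (Nat.le_add_right _ _)).2 (by simp)⟩⟩)
    (by
      constructor
      · rintro ⟨a, i⟩ ⟨b, j⟩ h
        obtain ⟨rfl, h⟩ := Prod.mk.inj (Subtype.mk.inj h)
        have : (i : ℕ) = j := by simpa [hk.ne'] using h
        rw [Fin.ext this]
      · rintro ⟨⟨a, b⟩, ha, hab, hb, hmod⟩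
        obtain ⟨j, hj⟩ := (Nat.modEq_iff_dvd' hab.le).1 hmod
        obtain ⟨i, rfl⟩ : ∃ i, j = i + 1 :=
          Nat.exists_eq_succ_of_ne_zero (by rintro rfl; simp only at hab hj; omega)
        obtain rfl : b = a + k * (i + 1) := by simp only at hab hj; omega
        exact ⟨⟨a, i, (le_sectorSteps_iff hk ha).2 hb⟩, rfl⟩)

lemma summable_rpow_neg (hs : 1 < s) : Summable fun n : ℕ ↦ (n : ℝ) ^ (-s) :=
  Real.summable_nat_rpow.2 (by linarith)

lemma mul_rpow_mul_columnSum_mem_Icc (hs : 1 < s) {k : ℕ} (hk : 0 < k) (a : ℕ) :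
    k * ((a : ℝ) ^ (-s) * columnSum s k a) ∈
      Set.Icc (sectorIntegral s * (a : ℝ) ^ (-(2 * s - 1)) - k * (a : ℝ) ^ (-(2 * s)))
        (sectorIntegral s * (a : ℝ) ^ (-(2 * s - 1))) := by
  rcases a.eq_zero_or_pos with rfl | ha
  · simp [Real.zero_rpow (show -s ≠ 0 by linarith), Real.zero_rpow (show -(2 * s) ≠ 0 by linarith),
      Real.zero_rpow (show 1 - 2 * s ≠ 0 by linarith)]
  have ha' : (0 : ℝ) < a := by exact_mod_cast ha
  have hpos := Real.rpow_pos_of_pos ha' (-s)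
  have h₁ : (a : ℝ) ^ (-(2 * s - 1)) = a ^ (-s) * a ^ (1 - s) := by
    rw [← Real.rpow_add ha']; ring_nf
  have h₂ : (a : ℝ) ^ (-(2 * s)) = a ^ (-s) * a ^ (-s) := by
    rw [← Real.rpow_add ha']; ring_nf
  have hlow := mul_le_mul_of_nonneg_left (le_mul_columnSum (s := s) (by linarith) hk ha) hpos.le
  have hupp := mul_le_mul_of_nonneg_left (mul_columnSum_le (s := s) (by linarith) hk ha) hpos.le
  rw [h₁, h₂]
  constructor <;> linarith

lemma summable_rpow_mul_columnSum (hs : 1 < s) {k : ℕ} (hk : 0 < k) :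
    Summable fun a : ℕ ↦ (a : ℝ) ^ (-s) * columnSum s k a := by
  refine .of_nonneg_of_le (f := fun a : ℕ ↦ (sectorIntegral s / k) * (a : ℝ) ^ (-(2 * s - 1)))
    (fun a ↦ ?_) (fun a ↦ ?_) ((summable_rpow_neg (by linarith)).mul_left _)
  · unfold columnSum; positivity
  · rw [div_mul_eq_mul_div, le_div_iff₀' (by positivity)]
    exact (mul_rpow_mul_columnSum_mem_Icc hs hk a).2

lemma hasSum_lowerSector (hs : 1 < s) {k : ℕ} (hk : 0 < k) :
    HasSum (fun q : lowerSector k ↦ ((q.1.1 * q.1.2 : ℕ) : ℝ) ^ (-s))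
      (∑' a : ℕ, (a : ℝ) ^ (-s) * columnSum s k a) := by
  have hcol (a : ℕ) : HasSum (fun j : Fin (sectorSteps k a) ↦
      ((a * (a + k * (j + 1)) : ℕ) : ℝ) ^ (-s)) ((a : ℝ) ^ (-s) * columnSum s k a) := by
    rw [columnSum, Finset.mul_sum, Finset.sum_range]
    convert hasSum_fintype _ using 3 with j
    push_cast
    rw [Real.mul_rpow (by positivity) (by positivity)]
  have hsum := summable_rpow_mul_columnSum hs hk
  rw [← (lowerSectorEquiv hk).hasSum_iff]
  refine HasSum.sigma_of_hasSum hsum.hasSum hcol ((summable_sigma_of_nonneg fun _ ↦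
    Real.rpow_nonneg (Nat.cast_nonneg _) _).2 ⟨fun a ↦ (hcol a).summable, ?_⟩)
  exact hsum.congr fun a ↦ (hcol a).tsum_eq.symm

lemma mul_tsum_lowerSector_mem_Ioo (hs : 1 < s) {k : ℕ} (hk : 0 < k) :
    k * ∑' q : lowerSector k, ((q.1.1 * q.1.2 : ℕ) : ℝ) ^ (-s) ∈
      Set.Ioo (sectorIntegral s * zetaReal (2 * s - 1) - k * zetaReal (2 * s))
        (sectorIntegral s * zetaReal (2 * s - 1)) := by
  have hz₁ := (summable_rpow_neg (s := 2 * s - 1) (by linarith)).mul_left (sectorIntegral s)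
  have hz₂ := (summable_rpow_neg (s := 2 * s) (by linarith)).mul_left (k : ℝ)
  have hcol := (summable_rpow_mul_columnSum hs hk).mul_left (k : ℝ)
  have hone : columnSum s k 1 = 0 := by rw [columnSum, sectorSteps_one hk, Finset.sum_range_zero]
  have hk' : (1 : ℝ) ≤ k := by exact_mod_cast hk
  have hJ₀ : 0 < sectorIntegral s := sectorIntegral_pos
  have hJ₁ : sectorIntegral s < 1 := sectorIntegral_lt_one (by linarith)
  rw [(hasSum_lowerSector hs hk).tsum_eq, zetaReal, zetaReal, ← tsum_mul_left, ← tsum_mul_left,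
    ← tsum_mul_left, ← hz₁.tsum_sub hz₂]
  constructor
  · refine (hz₁.sub hz₂).tsum_lt_tsum (fun a ↦ (mul_rpow_mul_columnSum_mem_Icc hs hk a).1)
      (i := 1) ?_ hcol
    simp only [Nat.cast_one, Real.one_rpow, hone]
    linarith
  · refine hcol.tsum_lt_tsum (fun a ↦ (mul_rpow_mul_columnSum_mem_Icc hs hk a).2) (i := 1) ?_ hz₁
    simp only [Nat.cast_one, Real.one_rpow, hone]
    linarith

lemma sector_eq_union (k : ℕ) :
    sector k = (lowerSector k ∪ Set.range fun q : lowerSector k ↦ q.1.swap) ∪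
      Set.range fun n : ℕ ↦ (n + 1, n + 1) := by
  ext ⟨a, b⟩
  simp only [sector, lowerSector, Set.mem_union, Set.mem_range, Set.mem_ofPred_eq, Subtype.exists,
    Prod.exists, Prod.swap_prod_mk, Prod.mk.injEq]
  constructor
  · rintro ⟨ha, hb, hab, hba, hmod⟩
    rcases lt_trichotomy a b with h | rfl | h
    · exact .inl (.inl ⟨ha, h, hba, hmod⟩)
    · exact .inr ⟨a - 1, by omega, by omega⟩
    · exact .inl (.inr ⟨b, a, ⟨hb, h, hab, hmod.symm⟩, rfl, rfl⟩)
  · rintro ((⟨ha, hab, hba, hmod⟩ | ⟨_, _, ⟨ha, hab, hba, hmod⟩, rfl, rfl⟩) | ⟨n, rfl, rfl⟩)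
    · exact ⟨ha, ha.trans hab, by nlinarith, hba, hmod⟩
    · exact ⟨ha.trans hab, ha, hba, by nlinarith, hmod.symm⟩
    · exact ⟨n.succ_pos, n.succ_pos, by nlinarith [n.succ_pos], by nlinarith [n.succ_pos], rfl⟩

lemma hasSum_range_diagonal (hs : 1 / 2 < s) :
    HasSum (fun q : Set.range fun n : ℕ ↦ (n + 1, n + 1) ↦ ((q.1.1 * q.1.2 : ℕ) : ℝ) ^ (-s))
      (zetaReal (2 * s)) := by
  refine (Function.Injective.hasSum_range_iff (g := fun n : ℕ ↦ (n + 1, n + 1))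
    (f := fun q ↦ ((q.1 * q.2 : ℕ) : ℝ) ^ (-s)) (fun m n h ↦ by simpa using h)).2 ?_
  have h := (hasSum_nat_add_iff' 1).2 (summable_rpow_neg (s := 2 * s) (by linarith)).hasSum
  rw [Finset.sum_range_one, Nat.cast_zero, Real.zero_rpow (by linarith), sub_zero] at h
  refine h.congr_fun fun n ↦ ?_
  rw [Function.comp_apply, Nat.cast_mul, Real.mul_rpow (by positivity) (by positivity),
    ← Real.rpow_add (by positivity)]
  ring_nf

lemma hasSum_sector (hs : 1 < s) {k : ℕ} (hk : 0 < k) :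
    HasSum (fun q : sector k ↦ ((q.1.1 * q.1.2 : ℕ) : ℝ) ^ (-s))
      (2 * (∑' q : lowerSector k, ((q.1.1 * q.1.2 : ℕ) : ℝ) ^ (-s)) + zetaReal (2 * s)) := by
  set f : ℕ × ℕ → ℝ := fun q ↦ ((q.1 * q.2 : ℕ) : ℝ) ^ (-s)
  have hlow : HasSum (f ∘ (↑) : lowerSector k → ℝ) (∑' q : lowerSector k, f q) :=
    (hasSum_lowerSector hs hk).summable.hasSum
  have hupp : HasSum (f ∘ (↑) : (Set.range fun q : lowerSector k ↦ q.1.swap) → ℝ)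
      (∑' q : lowerSector k, f q) := by
    refine (Prod.swap_injective.comp Subtype.val_injective).hasSum_range_iff.2 ?_
    simpa only [f, Function.comp_def, Prod.fst_swap, Prod.snd_swap, mul_comm] using hlow
  have hdiag := hasSum_range_diagonal (s := s) (by linarith)
  have hdisj₁ : Disjoint (lowerSector k) (Set.range fun q : lowerSector k ↦ q.1.swap) := by
    refine Set.disjoint_right.2 ?_
    rintro _ ⟨⟨q, hq⟩, rfl⟩ h
    exact hq.2.1.asymm h.2.1
  have hdisj₂ : Disjoint (lowerSector k ∪ Set.range fun q : lowerSector k ↦ q.1.swap)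
      (Set.range fun n : ℕ ↦ (n + 1, n + 1)) := by
    refine Set.disjoint_right.2 ?_
    rintro _ ⟨n, rfl⟩ (h | ⟨⟨⟨a, b⟩, hq⟩, h⟩)
    · exact h.2.1.false
    · obtain ⟨rfl, rfl⟩ := Prod.mk.inj h
      exact hq.2.1.false
  have h := (hlow.add_disjoint hdisj₁ hupp).add_disjoint hdisj₂ hdiag
  rwa [← sector_eq_union, ← two_mul] at h

/-- The sum of `(a * b) ^ (-s)` over the pairs `(a, b)` in `sector k`. -/
def sectorSum (s : ℝ) (k : ℕ) : ℝ := ∑' q : sector k, ((q.1.1 * q.1.2 : ℕ) : ℝ) ^ (-s)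

lemma hasSum_sectorSum (hs : 1 < s) {k : ℕ} (hk : 0 < k) :
    HasSum (fun q : sector k ↦ ((q.1.1 * q.1.2 : ℕ) : ℝ) ^ (-s)) (sectorSum s k) :=
  (hasSum_sector hs hk).summable.hasSum

lemma mul_sectorSum_mem_Ioo (hs : 1 < s) {k : ℕ} (hk : 0 < k) : k * sectorSum s k ∈
      Set.Ioo (2 * sectorIntegral s * zetaReal (2 * s - 1) - k * zetaReal (2 * s))
        (2 * sectorIntegral s * zetaReal (2 * s - 1) + k * zetaReal (2 * s)) := by
  have h := mul_tsum_lowerSector_mem_Ioo hs hk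
  rw [sectorSum, (hasSum_sector hs hk).tsum_eq]
  constructor <;> linarith [h.1, h.2]

end SectorSums

/-! ### Primitive Gaussian integers -/

section PrimitiveGaussianIntegers

/-- The primitive Gaussian integers in the half-open first quadrant, which represent the classes
of primitive Gaussian integers modulo units. -/
def primitiveQuadrant : Set GaussianInt := {z | 0 < z.re ∧ 0 ≤ z.im ∧ IsCoprime z.re z.im}

lemma exists_mem_quadrant {P : GaussianInt → Prop} (hP : ∀ z, P z → P (Zsqrtd.sqrtd * z))
    {z : GaussianInt} (hz₀ : z ≠ 0) (hz : P z) : ∃ w : GaussianInt, 0 < w.re ∧ 0 ≤ w.im ∧ P w := by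
  have h₁ := hP z hz
  have h₂ := hP _ h₁
  have h₃ := hP _ h₂
  have hne : z.re ≠ 0 ∨ z.im ≠ 0 := by
    by_contra! h
    exact hz₀ (Zsqrtd.ext h.1 h.2)
  obtain ⟨hre, him⟩ | ⟨hre, him⟩ | ⟨hre, him⟩ | ⟨hre, him⟩ : (0 < z.re ∧ 0 ≤ z.im) ∨
      (0 ≤ z.re ∧ z.im < 0) ∨ (z.re < 0 ∧ z.im ≤ 0) ∨ (z.re ≤ 0 ∧ 0 < z.im) := by omega
  · exact ⟨z, hre, him, hz⟩
  · exact ⟨_, by simpa using him, by simpa using hre, h₁⟩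
  · exact ⟨_, by simpa using hre, by simpa using him, h₂⟩
  · exact ⟨_, by simpa using him, by simpa using hre, h₃⟩

lemma gaussianInt_norm_eq (z : GaussianInt) : z.norm = z.re ^ 2 + z.im ^ 2 := by
  rw [Zsqrtd.norm_def]; ring

/-- Fermat's descent: with `t` reduced to `|t| ≤ n / 2`, the cofactor of `n` in `t ^ 2 + 1` is
smaller than `n`. -/
lemma exists_norm_eq_and_dvd (n : ℕ) (hn : 0 < n) (t : ℤ) (h : (n : ℤ) ∣ t ^ 2 + 1) :
    ∃ z : GaussianInt, z.norm = n ∧ z ∣ ⟨1, t⟩ := by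
  induction n using Nat.strong_induction_on generalizing t with | _ n ih
  rcases (Nat.succ_le_of_lt hn).eq_or_lt with rfl | hn₁
  · exact ⟨1, by simp, one_dvd _⟩
  obtain ⟨r, hr, c, hc⟩ : ∃ r : ℤ, (2 * r) ^ 2 ≤ (n : ℤ) ^ 2 ∧ (n : ℤ) ∣ t - r := by
    refine ⟨t.bmod n, sq_le_sq' ?_ ?_, Int.dvd_self_sub_bmod⟩
    · have := Int.le_bmod (x := t) hn; omega
    · have := Int.bmod_le (x := t) hn; omega
  obtain ⟨m, hm⟩ : (n : ℤ) ∣ r ^ 2 + 1 := by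
    have : r ^ 2 + 1 = t ^ 2 + 1 - (t - r) * (t + r) := by ring
    rw [this]
    exact dvd_sub h (Dvd.dvd.mul_right ⟨c, hc⟩ _)
  have hm₀ : 0 < m := by nlinarith
  have hmn : m < n := by nlinarith
  lift m to ℕ using hm₀.le
  obtain ⟨w, hw, z, hz⟩ := ih m (by exact_mod_cast hmn) (by exact_mod_cast hm₀) r ⟨n, by linarith⟩
  have hnorm : z.norm = n := by
    have := congrArg Zsqrtd.norm hz
    rw [Zsqrtd.norm_mul, hw, gaussianInt_norm_eq] at this
    exact mul_left_cancel₀ hm₀.ne' (by linarith)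
  have hzn : z ∣ (n : GaussianInt) := ⟨star z, by
    rw [← Zsqrtd.norm_eq_mul_conj, hnorm]; rfl⟩
  have hsplit : (⟨1, t⟩ : GaussianInt) = ⟨1, r⟩ + n * ⟨0, c⟩ := by
    ext <;> simp; linarith
  exact ⟨z, hnorm, hsplit ▸ dvd_add ⟨w, by rw [hz, mul_comm]⟩ (hzn.mul_right _)⟩

lemma exists_mem_primitiveQuadrant_of_dvd {n : ℕ} (hn : 0 < n) {t : ℤ} (h : (n : ℤ) ∣ t ^ 2 + 1) :
    ∃ z ∈ primitiveQuadrant, z.norm = n ∧ (n : ℤ) ∣ t * z.re - z.im := by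
  obtain ⟨z₀, hz₀⟩ := exists_norm_eq_and_dvd n hn t h
  have hne : z₀ ≠ 0 := by
    rintro rfl
    exact hn.ne (by exact_mod_cast Zsqrtd.norm_zero.symm.trans hz₀.1)
  have hunit : IsUnit (Zsqrtd.sqrtd : GaussianInt) := .of_mul_eq_one (-Zsqrtd.sqrtd) (by decide)
  have hrot (z : GaussianInt) (hz : z.norm = n ∧ z ∣ ⟨1, t⟩) :
      Zsqrtd.norm (Zsqrtd.sqrtd * z) = n ∧ Zsqrtd.sqrtd * z ∣ ⟨1, t⟩ :=
    ⟨by rw [Zsqrtd.norm_mul, hz.1]; exact one_mul _, hunit.mul_left_dvd.2 hz.2⟩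
  obtain ⟨z, hre, him, hzn, w, hw⟩ :=
    exists_mem_quadrant (P := fun z ↦ z.norm = n ∧ z ∣ ⟨1, t⟩) hrot hne hz₀
  have h₁ : 1 = z.re * w.re - z.im * w.im := by
    simpa [sub_eq_add_neg] using congrArg Zsqrtd.re hw
  have h₂ : t = z.re * w.im + z.im * w.re := congrArg Zsqrtd.im hw
  refine ⟨z, ⟨hre, him, w.re, -w.im, by linarith⟩, hzn, w.im, ?_⟩
  rw [← hzn, gaussianInt_norm_eq]
  linear_combination z.re * h₂ - z.im * h₁

/-- The number of square roots of `-1` modulo `n`. -/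
def sqrtNegOneCount (n : ℕ) : ℕ := Nat.card {t : ZMod n // t ^ 2 = -1}

lemma re_mul_inv_eq_one {n : ℕ} {z : GaussianInt} (hz : IsCoprime z.re z.im) (hn : z.norm = n) :
    (z.re : ZMod n) * (z.re : ZMod n)⁻¹ = 1 := by
  refine ZMod.coe_int_mul_inv_eq_one ?_
  rw [← hn, gaussianInt_norm_eq]
  rw [sq z.re]
  exact hz.pow_right.mul_add_left_right z.re

lemma slope_sq {n : ℕ} {z : GaussianInt} (hz : IsCoprime z.re z.im) (hn : z.norm = n) :
    ((z.im : ZMod n) * (z.re : ZMod n)⁻¹) ^ 2 = -1 := by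
  have h₁ := re_mul_inv_eq_one hz hn
  have h₂ : (z.re : ZMod n) ^ 2 + (z.im : ZMod n) ^ 2 = 0 := by
    have := congrArg (Int.cast : ℤ → ZMod n) (hn.symm.trans (gaussianInt_norm_eq z))
    push_cast at this
    rw [← this, ZMod.natCast_self]
  linear_combination (z.re : ZMod n)⁻¹ ^ 2 * h₂ - (z.re * (z.re : ZMod n)⁻¹ + 1) * h₁

lemma eq_of_dvd_im_star_mul {n : ℕ} {z w : GaussianInt} (hz : z.norm = n) (hw : w.norm = n)
    (hre : 0 < (star z * w).re) (him : (n : ℤ) ∣ (star z * w).im) : z = w := by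
  obtain ⟨c, hc⟩ := him
  have hnorm : (star z * w).re ^ 2 + (n * c) ^ 2 = (n : ℤ) ^ 2 := by
    rw [← hc, ← gaussianInt_norm_eq, Zsqrtd.norm_mul, Zsqrtd.norm_conj, hz, hw, sq]
  have hc₀ : c = 0 := by
    by_contra h
    have := mul_le_mul_of_nonneg_left ((one_le_sq_iff_one_le_abs c).2 (Int.one_le_abs h))
      (sq_nonneg (n : ℤ))
    nlinarith
  have hz₀ : star z ≠ 0 := by
    rintro h
    simp [h] at hre
  refine mul_left_cancel₀ hz₀ ?_
  rw [mul_comm, ← Zsqrtd.norm_eq_mul_conj, hz]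
  rw [hc₀, mul_zero] at hc hnorm
  have : (star z * w).re = n := by nlinarith
  exact Zsqrtd.ext (by simpa using this.symm) (by simpa using hc.symm)

lemma card_primitiveQuadrant_norm_eq {n : ℕ} (hn : 0 < n) :
    Nat.card {z : primitiveQuadrant // z.1.norm = n} = sqrtNegOneCount n := by
  refine Nat.card_congr (Equiv.ofBijective (fun z ↦ ⟨_, slope_sq z.1.2.2.2 z.2⟩) ⟨?_, ?_⟩)
  · rintro ⟨⟨z, hz⟩, hzn⟩ ⟨⟨w, hw⟩, hwn⟩ h
    have hslope : (z.im : ZMod n) * (z.re : ZMod n)⁻¹ = w.im * (w.re : ZMod n)⁻¹ :=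
      congrArg Subtype.val h
    have hz₁ := re_mul_inv_eq_one hz.2.2 hzn
    have hw₁ := re_mul_inv_eq_one hw.2.2 hwn
    suffices z = w by subst this; rfl
    refine eq_of_dvd_im_star_mul hzn hwn ?_ ?_
    · have hprod : 0 ≤ z.im * w.im := mul_nonneg hz.2.1 hw.2.1
      have := mul_pos hz.1 hw.1
      simpa using by linarith
    · rw [← ZMod.intCast_zmod_eq_zero_iff_dvd]
      have : (star z * w).im = z.re * w.im - z.im * w.re := by simp; ring
      rw [this]
      push_cast
      linear_combination z.im * w.re * hz₁ - z.re * w.im * hw₁ - z.re * w.re * hslope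
  · rintro ⟨t, ht⟩
    obtain ⟨t, rfl⟩ := ZMod.intCast_surjective t
    have hdvd : (n : ℤ) ∣ t ^ 2 + 1 := by
      rw [← ZMod.intCast_zmod_eq_zero_iff_dvd]
      push_cast
      rw [ht, neg_add_cancel]
    obtain ⟨z, hz, hzn, hslope⟩ := exists_mem_primitiveQuadrant_of_dvd hn hdvd
    rw [← ZMod.intCast_zmod_eq_zero_iff_dvd] at hslope
    push_cast at hslope
    refine ⟨⟨⟨z, hz⟩, hzn⟩, Subtype.ext ?_⟩
    linear_combination (t : ZMod n) * re_mul_inv_eq_one hz.2.2 hzn - (z.re : ZMod n)⁻¹ * hslope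

end PrimitiveGaussianIntegers

/-! ### The Dirichlet series of primitive Gaussian integers -/

section SquareRootsOfNegOne

lemma orderOf_units_eq_four_iff {R : Type*} [CommRing R] [Finite R] [IsCyclic Rˣ]
    (h : (-1 : R) ≠ 1) (u : Rˣ) : orderOf u = 4 ↔ (u : R) ^ 2 = -1 := by
  have h' : (-1 : Rˣ) ≠ 1 := by simpa [Units.ext_iff] using h
  have hneg : orderOf (-1 : Rˣ) = 2 := orderOf_eq_prime (by simp) h'
  rw [← Units.val_pow_eq_pow_val, ← Units.val_one, ← Units.val_neg, Units.val_inj]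
  constructor
  · intro hu
    have := Fintype.ofFinite Rˣ
    have hcard : ({v : Rˣ | orderOf v = 2} : Finset Rˣ).card = 1 :=
      IsCyclic.card_orderOf_eq_totient (hneg ▸ orderOf_dvd_card)
    have hsq : orderOf (u ^ 2) = 2 := by rw [orderOf_pow, hu]; rfl
    exact Finset.card_le_one.1 hcard.le _ (by simpa using hsq) _ (by simpa using hneg)
  · intro hu
    exact orderOf_eq_prime_pow (p := 2) (n := 1) (by rwa [pow_one, hu])
      (by rw [pow_succ, pow_mul, pow_one, hu, neg_one_sq])

lemma card_sq_eq_neg_one {R : Type*} [CommRing R] [Finite R] [IsCyclic Rˣ] (h : (-1 : R) ≠ 1) :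
    Nat.card {t : R // t ^ 2 = -1} = if 4 ∣ Nat.card Rˣ then 2 else 0 := by
  have := Fintype.ofFinite Rˣ
  have e : {u : Rˣ // orderOf u = 4} ≃ {t : R // t ^ 2 = -1} :=
    Equiv.ofBijective (fun u ↦ ⟨u.1, (orderOf_units_eq_four_iff h u.1).1 u.2⟩)
      ⟨fun u v huv ↦ Subtype.ext (Units.ext (congrArg Subtype.val huv)), fun t ↦
        ⟨⟨.mkOfMulEqOne t.1 (-t.1) (by linear_combination - t.2),
          (orderOf_units_eq_four_iff h _).2 t.2⟩, rfl⟩⟩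
  rw [← Nat.card_congr e, Nat.card_eq_fintype_card]
  split_ifs with h4
  · rw [Fintype.card_subtype, IsCyclic.card_orderOf_eq_totient (by simpa using h4)]
    rfl
  · rw [Fintype.card_eq_zero_iff]
    exact ⟨fun u ↦ h4 (u.2 ▸ orderOf_dvd_natCard u.1)⟩

lemma sqrtNegOneCount_zero : sqrtNegOneCount 0 = 0 :=
  have h (t : ℤ) : t ^ 2 ≠ -1 := ((by norm_num : (-1 : ℤ) < 0).trans_le (sq_nonneg t)).ne'
  Nat.card_eq_zero.2 (.inl ⟨fun t ↦ h t.1 t.2⟩)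

lemma sqrtNegOneCount_one : sqrtNegOneCount 1 = 1 := by
  rw [sqrtNegOneCount, Nat.card_eq_fintype_card]; decide

lemma sqrtNegOneCount_two : sqrtNegOneCount 2 = 1 := by
  rw [sqrtNegOneCount, Nat.card_eq_fintype_card]; decide

lemma sqrtNegOneCount_eq_zero_of_four_dvd {n : ℕ} (h : 4 ∣ n) : sqrtNegOneCount n = 0 := by
  refine Nat.card_eq_zero.2 (.inl ⟨fun t ↦ ?_⟩)
  have h₄ : ∀ t : ZMod 4, t ^ 2 ≠ -1 := by decide
  exact h₄ (ZMod.castHom h (ZMod 4) t.1) (by rw [← map_pow, t.2, map_neg, map_one])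

lemma sqrtNegOneCount_mul {m n : ℕ} (h : m.Coprime n) :
    sqrtNegOneCount (m * n) = sqrtNegOneCount m * sqrtNegOneCount n := by
  rw [sqrtNegOneCount, sqrtNegOneCount, sqrtNegOneCount, ← Nat.card_prod]
  refine Nat.card_congr (((ZMod.chineseRemainder h).toEquiv.subtypeEquiv fun t ↦ ?_).trans
    Equiv.subtypeProdEquivProd)
  rw [← (ZMod.chineseRemainder h).injective.eq_iff, map_pow, map_neg, map_one, Prod.ext_iff]
  rfl

lemma chiFour_mul (m n : ℕ) : chiFour (m * n) = chiFour m * chiFour n := by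
  have h (k : ℕ) : chiFour k = (ZMod.χ₄ k : ℤ) := by
    rw [chiFour, ZMod.χ₄_nat_eq_if_mod_four]
    split_ifs <;> first | omega | simp
  rw [h, h, h, Nat.cast_mul, map_mul, Int.cast_mul]

lemma sqrtNegOneCount_prime_pow_succ {p : ℕ} (hp : p.Prime) (k : ℕ) :
    (sqrtNegOneCount (p ^ (k + 1)) : ℝ) = chiFour p ^ k * (1 + chiFour p) := by
  rcases hp.eq_two_or_odd' with rfl | hodd
  · rcases k with _ | k
    · simp [sqrtNegOneCount_two, chiFour]
    · rw [sqrtNegOneCount_eq_zero_of_four_dvd ⟨2 ^ k, by ring⟩]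
      simp [chiFour]
  have hp₂ : p ≠ 2 := by rintro rfl; exact absurd hodd (by decide)
  have := Fact.mk hp
  have : IsCyclic (ZMod (p ^ (k + 1)))ˣ := ZMod.isCyclic_units_of_prime_pow p hp hp₂ _
  have : Fact (2 < p ^ (k + 1)) :=
    ⟨(lt_of_le_of_ne hp.two_le hp₂.symm).trans_le (Nat.le_self_pow k.succ_ne_zero p)⟩
  have hcard : 4 ∣ p ^ k * (p - 1) ↔ p % 4 = 1 := by
    have hcop : Nat.Coprime 4 (p ^ k) := .pow_right k (hodd.coprime_two_left.pow_left 2)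
    rw [hcop.dvd_mul_left]
    have := hp.two_le
    omega
  rw [sqrtNegOneCount, card_sq_eq_neg_one (ZMod.neg_one_ne_one), Nat.card_eq_fintype_card,
    ZMod.card_units_eq_totient, Nat.totient_prime_pow_succ hp]
  have hmod := hodd
  rw [Nat.odd_iff] at hmod
  rcases (by omega : p % 4 = 1 ∨ p % 4 = 3) with h | h <;> simp [hcard, chiFour, h]
  norm_num

end SquareRootsOfNegOne

section DirichletSeries

open ArithmeticFunction

variable {s : ℝ}

lemma mul_apply_prime_pow {R : Type*} [Semiring R] (f g : ArithmeticFunction R) {p : ℕ}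
    (hp : p.Prime) (k : ℕ) :
    (f * g) (p ^ k) =
      ∑ ij ∈ Finset.HasAntidiagonal.antidiagonal k, f (p ^ ij.1) * g (p ^ ij.2) := by
  rw [mul_apply, Nat.sum_divisorsAntidiagonal (f := fun x y ↦ f x * g y),
    Nat.sum_divisors_prime_pow hp,
    Finset.Nat.sum_antidiagonal_eq_sum_range_succ (f := fun i j ↦ f (p ^ i) * g (p ^ j))]
  refine Finset.sum_congr rfl fun i hi ↦ ?_
  rw [Nat.pow_div (Nat.lt_succ_iff.1 (Finset.mem_range.1 hi)) hp.pos]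

/-- The indicator function of the positive squares. -/
def squareIndicator : ArithmeticFunction ℝ := by
  classical exact ⟨fun n ↦ if n ≠ 0 ∧ IsSquare n then 1 else 0, by simp⟩

/-- `χ₋₄` as an arithmetic function. -/
def chiFourFunction : ArithmeticFunction ℝ := ⟨chiFour, by simp [chiFour]⟩

/-- The number of square roots of `-1` modulo `n`, as an arithmetic function of `n`. -/
def sqrtNegOneFunction : ArithmeticFunction ℝ :=
  ⟨fun n ↦ sqrtNegOneCount n, by rw [sqrtNegOneCount_zero, Nat.cast_zero]⟩

lemma isMultiplicative_squareIndicator : squareIndicator.IsMultiplicative := by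
  refine ⟨by simp [squareIndicator], fun {m n} h ↦ ?_⟩
  have hsq : IsSquare (m * n) ↔ IsSquare m ∧ IsSquare n := by
    refine ⟨fun ⟨c, hc⟩ ↦ ?_, fun h ↦ h.1.mul h.2⟩
    rw [← sq] at hc
    obtain ⟨d, hd⟩ := exists_eq_pow_of_mul_eq_pow (Nat.isUnit_iff.2 h) hc
    obtain ⟨e, he⟩ := exists_eq_pow_of_mul_eq_pow (Nat.isUnit_iff.2 h.symm) (mul_comm m n ▸ hc)
    exact ⟨⟨d, hd.trans (sq d)⟩, e, he.trans (sq e)⟩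
  simp only [squareIndicator, coe_mk, hsq, mul_ne_zero_iff]
  grind

lemma isMultiplicative_chiFourFunction : chiFourFunction.IsMultiplicative :=
  ⟨by simp [chiFourFunction, chiFour], fun _ ↦ chiFour_mul _ _⟩

lemma isMultiplicative_sqrtNegOneFunction : sqrtNegOneFunction.IsMultiplicative :=
  ⟨by simp [sqrtNegOneFunction, sqrtNegOneCount_one], fun h ↦ by
    simp [sqrtNegOneFunction, sqrtNegOneCount_mul h]⟩

lemma chiFour_pow (m k : ℕ) : chiFour (m ^ k) = chiFour m ^ k := by
  induction k with
  | zero => simp [chiFour]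
  | succ k ih => rw [pow_succ, chiFour_mul, ih, pow_succ]

lemma squareIndicator_mul_sqrtNegOneFunction_prime_pow {p : ℕ} (hp : p.Prime) (k : ℕ) :
    (squareIndicator * sqrtNegOneFunction) (p ^ k) = ∑ i ∈ Finset.range (k + 1), chiFour p ^ i := by
  have hsq₀ : squareIndicator 1 = 1 := isMultiplicative_squareIndicator.1
  have hcount₀ : sqrtNegOneFunction 1 = 1 := isMultiplicative_sqrtNegOneFunction.1
  have hcount (j : ℕ) : sqrtNegOneFunction (p ^ (j + 1)) = chiFour p ^ j * (1 + chiFour p) :=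
    sqrtNegOneCount_prime_pow_succ hp j
  have hsq₁ : squareIndicator p = 0 := by
    simp [squareIndicator, hp.prime.not_isSquare]
  have hsq₂ (i : ℕ) : squareIndicator (p ^ (i + 2)) = squareIndicator (p ^ i) := by
    have : IsSquare (p ^ (i + 2)) ↔ IsSquare (p ^ i) := by
      refine ⟨fun ⟨c, hc⟩ ↦ ?_, fun h ↦ pow_add p i 2 ▸ h.mul (IsSquare.sq p)⟩
      obtain ⟨d, rfl⟩ : p ∣ c :=
        (hp.dvd_mul.1 (hc ▸ dvd_pow_self p (by lia))).elim id id
      exact ⟨d, Nat.eq_of_mul_eq_mul_right (pow_pos hp.pos 2) (by linear_combination hc)⟩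
    simp [squareIndicator, this, hp.ne_zero]
  rw [mul_apply_prime_pow _ _ hp]
  induction k using Nat.twoStepInduction with
  | zero => simp [hsq₀, hcount₀]
  | one =>
    rw [Finset.Nat.sum_antidiagonal_succ]
    simp [hsq₀, hsq₁, hcount₀, Finset.sum_range_succ, by simpa using hcount 0]
  | more k ih _ =>
    rw [Finset.Nat.sum_antidiagonal_succ, Finset.Nat.sum_antidiagonal_succ]
    simp only [hsq₂, ih, zero_add, pow_zero, pow_one, hsq₀, hsq₁, hcount, Finset.sum_range_succ]
    ring

/-- Every Gaussian integer is a natural number times a primitive one. -/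
lemma squareIndicator_mul_sqrtNegOneFunction :
    squareIndicator * sqrtNegOneFunction = (zeta : ArithmeticFunction ℝ) * chiFourFunction := by
  have hl := isMultiplicative_squareIndicator.mul isMultiplicative_sqrtNegOneFunction
  have hr := isMultiplicative_zeta.natCast (R := ℝ) |>.mul isMultiplicative_chiFourFunction
  refine (hl.eq_iff_eq_on_prime_powers _ _ hr).2 fun p k hp ↦ ?_
  rw [squareIndicator_mul_sqrtNegOneFunction_prime_pow hp, coe_zeta_mul_apply,
    Nat.sum_divisors_prime_pow hp]
  exact Finset.sum_congr rfl fun i _ ↦ (chiFour_pow p i).symm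

lemma hasSum_mul_rpow_neg_iff (f : ArithmeticFunction ℝ) {A : ℝ} :
    HasSum (fun n : ℕ ↦ f n * (n : ℝ) ^ (-s)) A ↔ LSeriesHasSum (fun n ↦ (f n : ℂ)) s A := by
  unfold LSeriesHasSum
  rw [← Complex.hasSum_ofReal]
  refine iff_of_eq (congrArg (HasSum · (A : ℂ)) (funext fun n ↦ ?_))
  rcases eq_or_ne n 0 with rfl | hn
  · simp
  · rw [LSeries.term_of_ne_zero hn, Complex.ofReal_mul, Complex.ofReal_cpow n.cast_nonneg,
      Complex.ofReal_neg, Complex.cpow_neg, div_eq_mul_inv, Complex.ofReal_natCast]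

lemma hasSum_mul_apply_mul_rpow_neg {f g : ArithmeticFunction ℝ} {A B : ℝ}
    (hf : HasSum (fun n : ℕ ↦ f n * (n : ℝ) ^ (-s)) A)
    (hg : HasSum (fun n : ℕ ↦ g n * (n : ℝ) ^ (-s)) B) :
    HasSum (fun n : ℕ ↦ (f * g) n * (n : ℝ) ^ (-s)) (A * B) := by
  rw [hasSum_mul_rpow_neg_iff] at hf hg ⊢
  rw [Complex.ofReal_mul]
  convert hf.convolution hg using 1
  funext n
  rw [LSeries.convolution_def, mul_apply]
  push_cast
  rfl

lemma hasSum_squareIndicator (hs : 1 < s) :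
    HasSum (fun n : ℕ ↦ squareIndicator n * (n : ℝ) ^ (-s)) (zetaReal (2 * s)) := by
  have hinj : Function.Injective fun n : ℕ ↦ n * n := fun _ _ ↦ Nat.mul_self_inj.1
  rw [← hinj.hasSum_iff]
  · refine (summable_rpow_neg (by linarith : 1 < 2 * s)).hasSum.congr_fun fun n ↦ ?_
    rcases eq_or_ne n 0 with rfl | hn
    · simp [squareIndicator, Real.zero_rpow (by linarith : -(2 * s) ≠ 0)]
    · have : ((n * n : ℕ) : ℝ) ^ (-s) = (n : ℝ) ^ (-(2 * s)) := by
        rw [← sq, Nat.cast_pow, ← Real.rpow_natCast_mul n.cast_nonneg]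
        push_cast
        ring_nf
      simp only [Function.comp, this, squareIndicator, coe_mk]
      rw [if_pos ⟨mul_ne_zero hn hn, n, rfl⟩, one_mul]
  · intro n hn
    simp only [squareIndicator, coe_mk]
    rw [if_neg fun h ↦ hn (h.2.imp fun _ ↦ Eq.symm), zero_mul]

lemma hasSum_chiFour (hs : 1 < s) :
    HasSum (fun n : ℕ ↦ chiFourFunction n * (n : ℝ) ^ (-s)) (LFour s) := by
  refine (Summable.of_norm_bounded (summable_rpow_neg hs) fun n ↦ ?_).hasSum
  have hχ : ‖chiFourFunction n‖ ≤ 1 := by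
    simp only [chiFourFunction, coe_mk, chiFour]
    split_ifs <;> simp
  have hn : 0 ≤ (n : ℝ) ^ (-s) := by positivity
  rw [norm_mul, Real.norm_of_nonneg hn]
  exact mul_le_of_le_one_left hn hχ

lemma hasSum_squareIndicator_mul_sqrtNegOneFunction (hs : 1 < s) :
    HasSum (fun n : ℕ ↦ (squareIndicator * sqrtNegOneFunction) n * (n : ℝ) ^ (-s))
      (zetaReal s * LFour s) := by
  rw [squareIndicator_mul_sqrtNegOneFunction]
  refine hasSum_mul_apply_mul_rpow_neg ?_ (hasSum_chiFour hs)
  refine (summable_rpow_neg hs).hasSum.congr_fun fun n ↦ ?_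
  rcases eq_or_ne n 0 with rfl | hn
  · simp [Real.zero_rpow (by linarith : -s ≠ 0)]
  · simp [hn]

lemma sqrtNegOneFunction_nonneg (n : ℕ) : 0 ≤ sqrtNegOneFunction n :=
  Nat.cast_nonneg (sqrtNegOneCount n)

lemma sqrtNegOneFunction_le (n : ℕ) :
    sqrtNegOneFunction n ≤ (squareIndicator * sqrtNegOneFunction) n := by
  rcases eq_or_ne n 0 with rfl | hn
  · simp
  rw [mul_apply]
  calc sqrtNegOneFunction n = squareIndicator 1 * sqrtNegOneFunction n := by
        rw [isMultiplicative_squareIndicator.1, one_mul]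
    _ ≤ _ := by
        refine Finset.single_le_sum
          (f := fun x : ℕ × ℕ ↦ squareIndicator x.1 * sqrtNegOneFunction x.2)
          (fun x _ ↦ mul_nonneg ?_ (sqrtNegOneFunction_nonneg _))
          (by simp [hn] : (1, n) ∈ n.divisorsAntidiagonal)
        simp only [squareIndicator, coe_mk]
        positivity

lemma summable_sqrtNegOneFunction (hs : 1 < s) :
    Summable fun n : ℕ ↦ sqrtNegOneFunction n * (n : ℝ) ^ (-s) :=
  (hasSum_squareIndicator_mul_sqrtNegOneFunction hs).summable.of_nonneg_of_le
    (fun n ↦ mul_nonneg (sqrtNegOneFunction_nonneg n) (by positivity))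
    fun n ↦ mul_le_mul_of_nonneg_right (sqrtNegOneFunction_le n) (by positivity)

/-- The part of the Dirichlet series of `sqrtNegOneCount` supported on odd integers, which is the
sum of `N(π) ^ (-s)` over the primitive Gaussian integers `π` of odd norm, up to units. -/
def oddPrimitiveSeries (s : ℝ) : ℝ :=
  ∑' n : ℕ, {n | Odd n}.indicator (fun n : ℕ ↦ sqrtNegOneFunction n * (n : ℝ) ^ (-s)) n

lemma hasSum_odd_sqrtNegOneFunction (hs : 1 < s) :
    HasSum ({n | Odd n}.indicator fun n : ℕ ↦ sqrtNegOneFunction n * (n : ℝ) ^ (-s))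
      (oddPrimitiveSeries s) :=
  ((summable_sqrtNegOneFunction hs).indicator _).hasSum

lemma hasSum_even_sqrtNegOneFunction (hs : 1 < s) :
    HasSum ({n | Even n}.indicator fun n : ℕ ↦ sqrtNegOneFunction n * (n : ℝ) ^ (-s))
      (2 ^ (-s) * oddPrimitiveSeries s) := by
  rw [← (mul_right_injective₀ two_ne_zero).hasSum_iff]
  · refine ((hasSum_odd_sqrtNegOneFunction hs).mul_left (2 ^ (-s))).congr_fun fun m ↦ ?_
    rw [Function.comp, Set.indicator_of_mem (Set.mem_ofPred.2 (even_two_mul m))]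
    by_cases hm : Odd m
    · have : sqrtNegOneFunction (2 * m) = sqrtNegOneFunction m := by
        simp [sqrtNegOneFunction, sqrtNegOneCount_mul (Nat.coprime_two_left.2 hm),
          sqrtNegOneCount_two]
      rw [Set.indicator_of_mem (Set.mem_ofPred.2 hm), this, Nat.cast_mul,
        Real.mul_rpow (by positivity) (by positivity), Nat.cast_two]
      ring
    · have : sqrtNegOneFunction (2 * m) = 0 := by
        obtain ⟨c, rfl⟩ := (Nat.not_odd_iff_even.1 hm).two_dvd
        simp [sqrtNegOneFunction, sqrtNegOneCount_eq_zero_of_four_dvd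
          (Dvd.intro c (mul_assoc 2 2 c))]
      rw [Set.indicator_of_notMem (Set.mem_ofPred.not.2 hm), this, zero_mul, mul_zero]
  · intro n hn
    exact Set.indicator_of_notMem (fun h ↦ hn (h.two_dvd.imp fun _ ↦ Eq.symm)) _

lemma oddPrimitiveSeries_mul_zetaReal (hs : 1 < s) :
    oddPrimitiveSeries s * (1 + 2 ^ (-s)) * zetaReal (2 * s) = zetaReal s * LFour s := by
  have hsum := (hasSum_odd_sqrtNegOneFunction hs).add (hasSum_even_sqrtNegOneFunction hs)
  have hsplit (n : ℕ) : sqrtNegOneFunction n * (n : ℝ) ^ (-s) =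
      {n | Odd n}.indicator (fun n : ℕ ↦ sqrtNegOneFunction n * (n : ℝ) ^ (-s)) n +
        {n | Even n}.indicator (fun n : ℕ ↦ sqrtNegOneFunction n * (n : ℝ) ^ (-s)) n := by
    have : {n : ℕ | Even n} = {n | Odd n}ᶜ := by ext n; simp
    rw [this, Set.indicator_self_add_compl_apply]
  have h := hasSum_mul_apply_mul_rpow_neg (hasSum_squareIndicator hs) (hsum.congr_fun hsplit)
  rw [← h.unique (hasSum_squareIndicator_mul_sqrtNegOneFunction hs)]
  ring

lemma oddPrimitiveSeries_pos (hs : 1 < s) : 0 < oddPrimitiveSeries s := by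
  refine (hasSum_odd_sqrtNegOneFunction hs).summable.tsum_pos (fun n ↦ ?_) 1 ?_
  · exact Set.indicator_nonneg
      (fun n _ ↦ mul_nonneg (sqrtNegOneFunction_nonneg n) (by positivity)) n
  · simp [isMultiplicative_sqrtNegOneFunction.1]

lemma hasSum_card_fiber_mul {α β : Type*} (N : α → β) {g : β → ℝ} {S : ℝ}
    (h : HasSum (fun a ↦ g (N a)) S) : HasSum (fun b ↦ Nat.card {a // N a = b} * g b) S := by
  refine (h.tsum_fiberwise N).congr_fun fun b ↦ ?_
  rw [tsum_congr fun a : N ⁻¹' {b} ↦ congrArg g a.2, tsum_const, nsmul_eq_mul]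
  rfl

lemma hasSum_comp_of_hasSum_card_fiber_mul {α β : Type*} {N : α → β}
    (hN : ∀ b, Finite {a // N a = b}) {g : β → ℝ} (hg : 0 ≤ g) {S : ℝ}
    (h : HasSum (fun b ↦ Nat.card {a // N a = b} * g b) S) : HasSum (fun a ↦ g (N a)) S := by
  have hsummable : Summable fun a ↦ g (N a) := by
    refine (summable_partition (s := fun b ↦ N ⁻¹' {b}) (fun a ↦ hg (N a)) fun a ↦
      ⟨N a, rfl, fun _ h ↦ Eq.symm h⟩).2 ⟨fun b ↦ have : Finite (N ⁻¹' {b}) := hN b; .of_finite, ?_⟩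
    refine h.summable.congr fun b ↦ ?_
    rw [tsum_congr fun a : N ⁻¹' {b} ↦ congrArg g a.2, tsum_const, nsmul_eq_mul]
    rfl
  exact h.unique (hasSum_card_fiber_mul N hsummable.hasSum) ▸ hsummable.hasSum

lemma finite_gaussianInt_norm_natAbs_eq (n : ℕ) : {z : GaussianInt | z.norm.natAbs = n}.Finite := by
  refine (((Set.finite_Icc (-n : ℤ) n).prod (Set.finite_Icc (-n : ℤ) n)).image
    fun p ↦ (⟨p.1, p.2⟩ : GaussianInt)).subset fun z hz ↦ ⟨(z.re, z.im), ?_, rfl⟩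
  have hz : z.re ^ 2 + z.im ^ 2 = n := by
    rw [← gaussianInt_norm_eq, ← GaussianInt.abs_natCast_norm]
    exact congrArg _ hz
  simp only [Set.mem_prod, Set.mem_Icc, ← abs_le]
  have habs (a b : ℤ) (h : a ^ 2 + b ^ 2 = n) : |a| ≤ n := by
    have := Int.natAbs_le_self_sq a
    rw [Int.natCast_natAbs] at this
    nlinarith
  exact ⟨habs _ _ hz, habs _ _ (add_comm (z.re ^ 2) _ ▸ hz)⟩

lemma hasSum_primitiveQuadrant_of_hasSum {C : Set ℕ} {S : ℝ} (hs : 1 < s)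
    (h : HasSum (C.indicator fun n : ℕ ↦ sqrtNegOneFunction n * (n : ℝ) ^ (-s)) S) :
    HasSum (fun z : ↥(primitiveQuadrant ∩ {z | z.norm.natAbs ∈ C}) ↦
      (z.1.norm.natAbs : ℝ) ^ (-s)) S := by
  let N (z : GaussianInt) : ℕ := z.norm.natAbs
  let f (n : ℕ) : ℝ := (n : ℝ) ^ (-s)
  have hfin (n : ℕ) : Finite {z : primitiveQuadrant // N z = n} :=
    (finite_gaussianInt_norm_natAbs_eq n).preimage Subtype.val_injective.injOn
  have hcard (n : ℕ) : Nat.card {z : primitiveQuadrant // N z = n} * f n =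
      sqrtNegOneFunction n * f n := by
    rcases eq_or_ne n 0 with rfl | hn
    · simp [f, Real.zero_rpow (by linarith : -s ≠ 0)]
    · have : sqrtNegOneFunction n = Nat.card {z : primitiveQuadrant // z.1.norm = n} :=
        congrArg Nat.cast (card_primitiveQuadrant_norm_eq hn.pos).symm
      have hN (z : GaussianInt) : N z = n ↔ z.norm = n := by
        rw [← GaussianInt.abs_natCast_norm, Nat.cast_inj]
      simp only [this, hN]
  have hsum := hasSum_comp_of_hasSum_card_fiber_mul (g := C.indicator f) hfin
    (Set.indicator_nonneg fun n _ ↦ by positivity)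
    (h.congr_fun fun n ↦ by
      rw [← Set.indicator_mul_right C (fun n ↦ (Nat.card {z : primitiveQuadrant // N z = n} : ℝ))]
      simp only [hcard, f])
  refine (hasSum_subtype_iff_indicator (f := f ∘ N)).2 ?_
  rw [← Set.indicator_indicator]
  exact hasSum_subtype_iff_indicator.1 hsum

end DirichletSeries

/-! ### Well-rounded lattices of Gaussian integers -/

section MinimalVectors

lemma norm_smul_add_smul_lt {E : Type*} [NormedAddCommGroup E] [NormedSpace ℝ E]
    [StrictConvexSpace ℝ E] {x y : E} (hxy : LinearIndependent ℝ ![x, y]) {a b : ℝ} (ha : a ≠ 0)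
    (hb : b ≠ 0) : ‖a • x + b • y‖ < |a| * ‖x‖ + |b| * ‖y‖ := by
  rw [← Real.norm_eq_abs, ← Real.norm_eq_abs, ← norm_smul, ← norm_smul]
  refine norm_add_lt_of_not_sameRay fun h ↦ ?_
  refine sameRay_or_sameRay_neg_iff_not_linearIndependent.1 (.inl h) ?_
  rw [LinearIndependent.pair_iff] at hxy ⊢
  intro s t hst
  simpa [ha, hb] using hxy (s * a) (t * b) (by simpa [mul_smul] using hst)

/-- Reducing the coefficients of a vector of `Λ` with respect to `x` and `y` to `[-1/2, 1/2]` leaves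
a vector shorter than `x`. -/
lemma eq_closure_pair_of_minimal {E : Type*} [NormedAddCommGroup E] [NormedSpace ℝ E]
    [StrictConvexSpace ℝ E] {Λ : AddSubgroup E} {x y : E} (hx : x ∈ Λ) (hy : y ∈ Λ)
    (hxy : LinearIndependent ℝ ![x, y]) (hspan : (Λ : Set E) ⊆ Submodule.span ℝ {x, y})
    (hxmin : ∀ z ∈ Λ, z ≠ 0 → ‖x‖ ≤ ‖z‖) (hymin : ∀ z ∈ Λ, z ≠ 0 → ‖y‖ ≤ ‖z‖) :
    Λ = AddSubgroup.closure {x, y} := by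
  refine le_antisymm (fun z hz ↦ ?_) (by simp [AddSubgroup.closure_le, Set.pair_subset_iff, hx, hy])
  obtain ⟨a, b, rfl⟩ := Submodule.mem_span_pair.1 (hspan hz)
  have hnorm : ‖x‖ = ‖y‖ := (hxmin y hy (hxy.ne_zero 1)).antisymm (hymin x hx (hxy.ne_zero 0))
  have hxpos : 0 < ‖x‖ := norm_pos_iff.2 (hxy.ne_zero 0)
  suffices (a - round a) • x + (b - round b) • y = 0 by
    refine AddSubgroup.mem_closure_pair.2 ⟨round a, round b, ?_⟩
    rw [← sub_eq_zero, ← neg_eq_zero, ← this]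
    module
  by_contra hne
  refine (hxmin _ ?_ hne).not_gt ?_
  · convert Λ.sub_mem hz (Λ.add_mem (Λ.zsmul_mem hx (round a)) (Λ.zsmul_mem hy (round b))) using 1
    module
  have ha := abs_sub_round a
  have hb := abs_sub_round b
  rcases eq_or_ne (a - round a) 0 with ha₀ | ha₀
  · rw [ha₀, zero_smul, zero_add, norm_smul, ← hnorm, Real.norm_eq_abs]
    nlinarith
  rcases eq_or_ne (b - round b) 0 with hb₀ | hb₀
  · rw [hb₀, zero_smul, add_zero, norm_smul, Real.norm_eq_abs]
    nlinarith
  have := norm_smul_add_smul_lt hxy ha₀ hb₀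
  rw [← hnorm] at this
  nlinarith

lemma linearIndependent_of_basis_det_ne_zero {R M ι : Type*} [CommRing R] [IsDomain R]
    [AddCommGroup M] [Module R M] [Fintype ι] [DecidableEq ι] (b : Module.Basis ι R M) {v : ι → M}
    (h : b.det v ≠ 0) : LinearIndependent R v := by
  rw [Module.Basis.det_apply] at h
  exact (Matrix.linearIndependent_cols_of_det_ne_zero h).of_comp b.equivFun.toLinearMap

lemma linearIndependent_complex_pair_iff {z w : ℂ} :
    LinearIndependent ℝ ![z, w] ↔ (star z * w).im ≠ 0 := by
  have hdet : Complex.basisOneI.det ![z, w] = (star z * w).im := by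
    simp [Module.Basis.det_apply, Matrix.det_fin_two, Module.Basis.toMatrix_apply]
    ring
  rw [← hdet]
  refine ⟨fun h ↦ ?_, linearIndependent_of_basis_det_ne_zero _⟩
  refine (Complex.basisOneI.is_basis_iff_det.1 ⟨h, ?_⟩).ne_zero
  exact h.span_eq_top_of_card_eq_finrank' (by simp)

/-- The lattice in `ℂ` formed by a lattice of Gaussian integers. -/
def complexLattice (L : AddSubgroup GaussianInt) : AddSubgroup ℂ :=
  L.map GaussianInt.toComplex.toAddMonoidHom

/-- Shortest nonzero vectors of a lattice of Gaussian integers. -/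
def IsMinimalVector (L : AddSubgroup GaussianInt) (x : GaussianInt) : Prop :=
  x ∈ L ∧ x ≠ 0 ∧ ∀ z ∈ L, z ≠ 0 → x.norm ≤ z.norm

lemma norm_toComplex_le_iff {x y : GaussianInt} :
    ‖GaussianInt.toComplex x‖ ≤ ‖GaussianInt.toComplex y‖ ↔ x.norm ≤ y.norm := by
  rw [← sq_le_sq₀ (norm_nonneg _) (norm_nonneg _), Complex.sq_norm, Complex.sq_norm,
    ← GaussianInt.intCast_real_norm, ← GaussianInt.intCast_real_norm, Int.cast_le]

lemma linearIndependent_toComplex_pair_iff {x y : GaussianInt} :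
    LinearIndependent ℝ ![GaussianInt.toComplex x, GaussianInt.toComplex y] ↔
      (star x * y).im ≠ 0 := by
  rw [linearIndependent_complex_pair_iff, Complex.star_def, ← GaussianInt.toComplex_star,
    ← GaussianInt.toComplex_mul, ← GaussianInt.intCast_im, Int.cast_ne_zero]

variable {L : AddSubgroup GaussianInt}

lemma isMinimalVector_iff {x : GaussianInt} : IsMinimalVector L x ↔
    GaussianInt.toComplex x ∈ complexLattice L ∧ x ≠ 0 ∧
      ∀ z ∈ complexLattice L, z ≠ 0 → ‖GaussianInt.toComplex x‖ ≤ ‖z‖ := by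
  simp [IsMinimalVector, complexLattice, norm_toComplex_le_iff]

lemma isWellRounded_complexLattice_iff : IsWellRounded (complexLattice L) ↔
    ∃ x y, IsMinimalVector L x ∧ IsMinimalVector L y ∧ (star x * y).im ≠ 0 := by
  simp only [isMinimalVector_iff, ← linearIndependent_toComplex_pair_iff]
  constructor
  · rintro ⟨_, _, hx, hy, hxy, hxmin, hymin⟩
    obtain ⟨⟨x, -, rfl⟩, y, -, rfl⟩ := And.intro hx hy
    exact ⟨x, y, ⟨hx, by simpa using hxy.ne_zero 0, hxmin⟩,
      ⟨hy, by simpa using hxy.ne_zero 1, hymin⟩, hxy⟩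
  · rintro ⟨x, y, ⟨hx, -, hxmin⟩, ⟨hy, -, hymin⟩, hxy⟩
    exact ⟨x, y, hx, hy, hxy, hxmin, hymin⟩

lemma eq_closure_pair_of_isMinimalVector {x y : GaussianInt} (hx : IsMinimalVector L x)
    (hy : IsMinimalVector L y) (hxy : (star x * y).im ≠ 0) : L = AddSubgroup.closure {x, y} := by
  obtain ⟨hxL, -, hxmin⟩ := isMinimalVector_iff.1 hx
  obtain ⟨hyL, -, hymin⟩ := isMinimalVector_iff.1 hy
  have hli := linearIndependent_toComplex_pair_iff.2 hxy
  have hspan : Submodule.span ℝ {GaussianInt.toComplex x, GaussianInt.toComplex y} = ⊤ := by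
    simpa [Set.pair_comm] using hli.span_eq_top_of_card_eq_finrank' (by simp)
  have := eq_closure_pair_of_minimal hxL hyL hli (by simp [hspan]) hxmin hymin
  refine AddSubgroup.map_injective (f := GaussianInt.toComplex.toAddMonoidHom)
    GaussianInt.toComplex_injective ?_
  rwa [AddMonoidHom.map_closure, Set.image_pair]

end MinimalVectors

section Index

/-- The `ℤ`-basis `1, i` of the Gaussian integers. -/
def gaussianIntBasis : Module.Basis (Fin 2) ℤ GaussianInt :=
  .ofEquivFun
    { toFun := fun z ↦ ![z.re, z.im]
      invFun := fun v ↦ ⟨v 0, v 1⟩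
      map_add' := fun z w ↦ by simp
      map_smul' := fun n z ↦ by simp
      left_inv := fun z ↦ rfl
      right_inv := fun v ↦ by ext i; fin_cases i <;> rfl }

lemma gaussianIntBasis_repr (z : GaussianInt) : ⇑(gaussianIntBasis.repr z) = ![z.re, z.im] := rfl

lemma index_closure_range_eq_natAbs_det {M ι : Type*} [AddCommGroup M] [Fintype ι] [DecidableEq ι]
    (b : Module.Basis ι ℤ M) {v : ι → M} (h : b.det v ≠ 0) :
    (AddSubgroup.closure (Set.range v)).index = (b.det v).natAbs := by
  have hv := linearIndependent_of_basis_det_ne_zero b h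
  rw [← Submodule.span_int_eq_addSubgroupClosure,
    AddSubgroup.index_eq_natAbs_det b _ (Module.Basis.span hv)]
  congr! 3 with i
  rw [Module.Basis.span_apply]

lemma index_closure_pair {x y : GaussianInt} (h : (star x * y).im ≠ 0) :
    (AddSubgroup.closure {x, y}).index = (star x * y).im.natAbs := by
  have hdet : gaussianIntBasis.det ![x, y] = (star x * y).im := by
    simp [Module.Basis.det_apply, Matrix.det_fin_two, Module.Basis.toMatrix_apply,
      gaussianIntBasis_repr]
    ring
  rw [← hdet, ← index_closure_range_eq_natAbs_det _ (hdet ▸ h), Matrix.range_cons_cons_empty]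

end Index

/-! ### Rhombic lattices -/

section RhombicLattices

/-- The lattice spanned by the sides of a rhombus with diagonals `z` and `w`, provided that these
sides `(z ± w) / 2` are Gaussian integers. -/
def rhombicLattice (z w : GaussianInt) : AddSubgroup GaussianInt where
  carrier := {c | ∃ m n : ℤ, 2 ∣ m - n ∧ 2 * c = m * z + n * w}
  zero_mem' := ⟨0, 0, by simp⟩
  add_mem' := by
    rintro c d ⟨m, n, hmn, hc⟩ ⟨m', n', hmn', hd⟩
    exact ⟨m + m', n + n', by omega, by push_cast; linear_combination hc + hd⟩
  neg_mem' := by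
    rintro c ⟨m, n, hmn, hc⟩
    exact ⟨-m, -n, by omega, by push_cast; linear_combination -hc⟩

lemma mem_rhombicLattice {z w c : GaussianInt} :
    c ∈ rhombicLattice z w ↔ ∃ m n : ℤ, 2 ∣ m - n ∧ 2 * c = m * z + n * w := Iff.rfl

lemma rhombicLattice_comm (z w : GaussianInt) : rhombicLattice z w = rhombicLattice w z := by
  ext c
  rw [mem_rhombicLattice, mem_rhombicLattice, exists_comm]
  simp only [add_comm, dvd_sub_comm]

lemma rhombicLattice_neg_right (z w : GaussianInt) :
    rhombicLattice z (-w) = rhombicLattice z w := by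
  ext c
  simp only [mem_rhombicLattice]
  refine exists_congr fun m ↦ (Equiv.neg ℤ).exists_congr fun n ↦ ?_
  simp only [Equiv.neg_apply, Int.cast_neg, neg_mul, mul_neg]
  exact and_congr_left' (by omega)

lemma rhombicLattice_neg_left (z w : GaussianInt) :
    rhombicLattice (-z) w = rhombicLattice z w := by
  rw [rhombicLattice_comm, rhombicLattice_neg_right, rhombicLattice_comm]

lemma rhombicLattice_add_sub (x y : GaussianInt) :
    rhombicLattice (x + y) (x - y) = AddSubgroup.closure {x, y} := by
  have two_ne_zero : (2 : GaussianInt) ≠ 0 := by decide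
  ext c
  rw [mem_rhombicLattice, AddSubgroup.mem_closure_pair]
  simp only [zsmul_eq_mul]
  constructor
  · rintro ⟨m, n, ⟨k, hk⟩, hc⟩
    obtain rfl : m = n + 2 * k := by omega
    refine ⟨n + k, k, mul_left_cancel₀ two_ne_zero ?_⟩
    rw [hc]
    push_cast
    ring
  · rintro ⟨k, l, rfl⟩
    exact ⟨k + l, k - l, ⟨l, by ring⟩, by push_cast; ring⟩

/-- Parameters `(π, a, b)` of the well-rounded lattices of Gaussian integers: the lattice spanned
by the sides of a rhombus with diagonals `a * π` and `b * i * π`. -/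
def rhombicParameters : Set (GaussianInt × ℕ × ℕ) :=
  {p | p.1 ∈ primitiveQuadrant ∧ p.2 ∈ sector 1 ∧ 2 ∣ (⟨p.2.1, p.2.2⟩ : GaussianInt) * p.1}

/-- The lattice with the given parameters. -/
def parameterLattice (p : GaussianInt × ℕ × ℕ) : AddSubgroup GaussianInt :=
  rhombicLattice (p.2.1 * p.1) (p.2.2 * ((Zsqrtd.sqrtd : GaussianInt) * p.1))

lemma mk_mul_eq (a b : ℤ) (z : GaussianInt) :
    (⟨a, b⟩ : GaussianInt) * z = a * z + b * ((Zsqrtd.sqrtd : GaussianInt) * z) := by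
  ext <;> simp

lemma exists_rhombus {p : GaussianInt × ℕ × ℕ}
    (hp : 2 ∣ (⟨p.2.1, p.2.2⟩ : GaussianInt) * p.1) :
    ∃ x y, 2 * x = (⟨p.2.1, p.2.2⟩ : GaussianInt) * p.1 ∧ 2 * y = ⟨p.2.1, -p.2.2⟩ * p.1 ∧
      parameterLattice p = AddSubgroup.closure {x, y} := by
  obtain ⟨x, hx⟩ := hp
  rw [mk_mul_eq p.2.1 p.2.2] at hx
  refine ⟨x, p.2.1 * p.1 - x, by rw [← hx, mk_mul_eq p.2.1 p.2.2], ?_, ?_⟩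
  · rw [mk_mul_eq p.2.1 (-p.2.2)]
    push_cast at hx ⊢
    linear_combination hx
  · rw [← rhombicLattice_add_sub, parameterLattice]
    congr 1
    · ring
    · push_cast at hx
      linear_combination hx

lemma sq_add_sq_trichotomy {a b m n : ℤ} (hab : a ^ 2 < 3 * b ^ 2) (hba : b ^ 2 < 3 * a ^ 2)
    (hmn : 2 ∣ m - n) : (m = 0 ∧ n = 0) ∨ (IsUnit m ∧ IsUnit n) ∨
      a ^ 2 + b ^ 2 < (m * a) ^ 2 + (n * b) ^ 2 := by
  have four_mul_sq_le (k c : ℤ) (hk : 2 ≤ k.natAbs) : 4 * c ^ 2 ≤ (k * c) ^ 2 := by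
    have : 2 ^ 2 ≤ k ^ 2 := sq_le_sq.2 (by rw [Int.abs_eq_natAbs k]; exact_mod_cast hk)
    rw [mul_pow]
    exact mul_le_mul_of_nonneg_right this (sq_nonneg c)
  simp only [Int.isUnit_iff_natAbs_eq]
  obtain h₀ | h₁ | hm | hn : (m = 0 ∧ n = 0) ∨ (m.natAbs = 1 ∧ n.natAbs = 1) ∨
      2 ≤ m.natAbs ∨ 2 ≤ n.natAbs := by omega
  · exact .inl h₀
  · exact .inr (.inl h₁)
  · exact .inr (.inr (by linarith [four_mul_sq_le m a hm, sq_nonneg (n * b)]))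
  · exact .inr (.inr (by linarith [four_mul_sq_le n b hn, sq_nonneg (m * a)]))

lemma four_mul_norm_eq {c z : GaussianInt} {m n : ℤ} (h : 2 * c = (⟨m, n⟩ : GaussianInt) * z) :
    4 * c.norm = (m ^ 2 + n ^ 2) * z.norm := by
  have := congrArg Zsqrtd.norm h
  rwa [Zsqrtd.norm_mul, Zsqrtd.norm_mul, gaussianInt_norm_eq ⟨m, n⟩] at this

lemma norm_pos_of_mem_primitiveQuadrant {z : GaussianInt} (hz : z ∈ primitiveQuadrant) :
    0 < z.norm := by
  have := hz.1
  rw [gaussianInt_norm_eq]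
  positivity

variable {p p' : GaussianInt × ℕ × ℕ}

lemma mem_parameterLattice {c : GaussianInt} : c ∈ parameterLattice p ↔ ∃ m n : ℤ, 2 ∣ m - n ∧
    2 * c = (⟨m * p.2.1, n * p.2.2⟩ : GaussianInt) * p.1 := by
  simp only [parameterLattice, mem_rhombicLattice, mk_mul_eq, Int.cast_mul, Int.cast_natCast,
    mul_assoc]

lemma isUnit_or_lt_four_mul_norm (hp : p ∈ rhombicParameters) {c : GaussianInt} (hc : c ≠ 0)
    {m n : ℤ} (hmn : 2 ∣ m - n) (h : 2 * c = (⟨m * p.2.1, n * p.2.2⟩ : GaussianInt) * p.1) :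
    (IsUnit m ∧ IsUnit n) ∨ (p.2.1 ^ 2 + p.2.2 ^ 2) * p.1.norm < 4 * c.norm := by
  obtain ⟨hπ, ⟨-, -, hab, hba, -⟩, -⟩ := hp
  have hcN := four_mul_norm_eq h
  have hc₀ := GaussianInt.norm_pos.2 hc
  rcases sq_add_sq_trichotomy (a := p.2.1) (b := p.2.2) (by exact_mod_cast hab)
    (by exact_mod_cast hba) hmn with ⟨rfl, rfl⟩ | h₁ | hlt
  · exact absurd (by simpa using hcN) hc₀.ne'
  · exact .inl h₁
  · rw [hcN]
    exact .inr (mul_lt_mul_of_pos_right hlt (norm_pos_of_mem_primitiveQuadrant hπ))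

lemma isMinimalVector_parameterLattice_iff (hp : p ∈ rhombicParameters) {c : GaussianInt} :
    IsMinimalVector (parameterLattice p) c ↔
      ∃ m n : ℤˣ, 2 * c = (⟨m * p.2.1, n * p.2.2⟩ : GaussianInt) * p.1 := by
  have norm_eq {c : GaussianInt} {m n : ℤˣ}
      (h : 2 * c = (⟨m * p.2.1, n * p.2.2⟩ : GaussianInt) * p.1) :
      4 * c.norm = (p.2.1 ^ 2 + p.2.2 ^ 2) * p.1.norm := by
    rw [four_mul_norm_eq h, mul_pow, mul_pow]
    norm_cast
    simp
  have mem {c : GaussianInt} {m n : ℤˣ}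
      (h : 2 * c = (⟨m * p.2.1, n * p.2.2⟩ : GaussianInt) * p.1) : c ∈ parameterLattice p := by
    refine mem_parameterLattice.2 ⟨m, n, ?_, h⟩
    rcases Int.units_eq_one_or m with rfl | rfl <;> rcases Int.units_eq_one_or n with rfl | rfl <;>
      decide
  have hMpos : 0 < (p.2.1 ^ 2 + p.2.2 ^ 2) * p.1.norm := by
    have := norm_pos_of_mem_primitiveQuadrant hp.1
    have := hp.2.1.1
    positivity
  constructor
  · rintro ⟨hc, hc₀, hmin⟩
    obtain ⟨m, n, hmn, h⟩ := mem_parameterLattice.1 hc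
    obtain ⟨x, hx⟩ := hp.2.2
    replace hx : 2 * x = (⟨(1 : ℤˣ) * p.2.1, (1 : ℤˣ) * p.2.2⟩ : GaussianInt) * p.1 := by
      simpa using hx.symm
    have hxN := norm_eq hx
    have hle : c.norm ≤ x.norm := hmin x (mem hx) (GaussianInt.norm_pos.1 (by omega))
    obtain ⟨⟨m, rfl⟩, ⟨n, rfl⟩⟩ :=
      (isUnit_or_lt_four_mul_norm hp hc₀ hmn h).resolve_right (by omega)
    exact ⟨m, n, h⟩
  · rintro ⟨m, n, h⟩
    have hcN := norm_eq h
    refine ⟨mem h, GaussianInt.norm_pos.1 (by omega), fun z hz hz₀ ↦ ?_⟩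
    obtain ⟨m', n', hmn', h'⟩ := mem_parameterLattice.1 hz
    rcases isUnit_or_lt_four_mul_norm hp hz₀ hmn' h' with ⟨⟨m', rfl⟩, ⟨n', rfl⟩⟩ | hlt
    · linarith [norm_eq h']
    · omega

/-- The lattices of Gaussian integers which are well-rounded as lattices in `ℂ`. -/
def wellRoundedLattices : Set (AddSubgroup GaussianInt) := {L | IsWellRounded (complexLattice L)}

lemma four_mul_im_star_mul_eq {x y z : GaussianInt} {a b a' b' : ℤ}
    (hx : 2 * x = (⟨a, b⟩ : GaussianInt) * z) (hy : 2 * y = (⟨a', b'⟩ : GaussianInt) * z) :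
    4 * (star x * y).im = (a * b' - b * a') * z.norm := by
  calc 4 * (star x * y).im = (star (2 * x) * (2 * y)).im := by
        simp only [Zsqrtd.im_mul, Zsqrtd.re_star, Zsqrtd.im_star, Zsqrtd.re_mul, Zsqrtd.re_ofNat,
          Zsqrtd.im_ofNat]
        ring
    _ = (a * b' - b * a') * z.norm := by
        rw [hx, hy, gaussianInt_norm_eq]
        simp only [Zsqrtd.im_mul, Zsqrtd.re_star, Zsqrtd.im_star, Zsqrtd.re_mul]
        ring

lemma two_mul_im_star_mul_eq {x y : GaussianInt}
    (hx : 2 * x = (⟨p.2.1, p.2.2⟩ : GaussianInt) * p.1)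
    (hy : 2 * y = (⟨p.2.1, -p.2.2⟩ : GaussianInt) * p.1) :
    2 * (star x * y).im = -(p.2.1 * p.2.2 * p.1.norm) := by
  linarith [four_mul_im_star_mul_eq hx hy]

lemma prod_pos_of_mem_rhombicParameters (hp : p ∈ rhombicParameters) :
    0 < p.2.1 * p.2.2 * p.1.norm :=
  mul_pos (mod_cast Nat.mul_pos hp.2.1.1 hp.2.1.2.1) (norm_pos_of_mem_primitiveQuadrant hp.1)

lemma two_mul_index_parameterLattice (hp : p ∈ rhombicParameters) :
    2 * (parameterLattice p).index = p.2.1 * p.2.2 * p.1.norm.natAbs := by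
  obtain ⟨x, y, hx, hy, heq⟩ := exists_rhombus hp.2.2
  have hpos := prod_pos_of_mem_rhombicParameters hp
  have hdet := two_mul_im_star_mul_eq hx hy
  rw [heq, index_closure_pair (by omega)]
  zify
  rw [abs_of_nonneg (GaussianInt.norm_nonneg _), abs_of_neg (by omega)]
  linarith

lemma parameterLattice_mem_wellRoundedLattices (hp : p ∈ rhombicParameters) :
    parameterLattice p ∈ wellRoundedLattices := by
  obtain ⟨x, y, hx, hy, -⟩ := exists_rhombus hp.2.2
  have hpos := prod_pos_of_mem_rhombicParameters hp
  have hdet := two_mul_im_star_mul_eq hx hy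
  refine isWellRounded_complexLattice_iff.2 ⟨x, y,
    (isMinimalVector_parameterLattice_iff hp).2 ⟨1, 1, by simpa using hx⟩,
    (isMinimalVector_parameterLattice_iff hp).2 ⟨1, -1, by simpa using hy⟩, by omega⟩

lemma eq_of_natCast_mul_eq {a a' : ℕ} {z z' : GaussianInt} (ha : 0 < a)
    (hz : IsCoprime z.re z.im) (hz' : IsCoprime z'.re z'.im)
    (h : (a : GaussianInt) * z = a' * z') : a = a' ∧ z = z' := by
  have gcd_eq (b : ℕ) {w : GaussianInt} (hw : IsCoprime w.re w.im) :
      Int.gcd ((b : GaussianInt) * w).re ((b : GaussianInt) * w).im = b := by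
    simp [Int.gcd_mul_left, Int.isCoprime_iff_gcd_eq_one.1 hw]
  obtain rfl : a = a' := by rw [← gcd_eq a hz, h, gcd_eq a' hz']
  exact ⟨rfl, mul_left_cancel₀ (Nat.cast_ne_zero.2 ha.ne') h⟩

/-- The sum and the difference of two independent minimal vectors are, up to order and sign, the
diagonals `a * π` and `b * i * π`, and of these only `a * π` can lie in the quadrant of `π`. -/
lemma diagonals_eq_of_parameterLattice_eq (hp : p ∈ rhombicParameters)
    (hp' : p' ∈ rhombicParameters) (h : parameterLattice p = parameterLattice p') :
    (p.2.1 : GaussianInt) * p.1 = p'.2.1 * p'.1 ∧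
      (p.2.2 : GaussianInt) * p.1 = p'.2.2 * p'.1 := by
  obtain ⟨x, y, hx, hy, -⟩ := exists_rhombus hp.2.2
  have hx' := (isMinimalVector_parameterLattice_iff hp).2 ⟨1, 1, by simpa using hx⟩
  have hy' := (isMinimalVector_parameterLattice_iff hp).2 ⟨1, -1, by simpa using hy⟩
  rw [h, isMinimalVector_parameterLattice_iff hp'] at hx' hy'
  obtain ⟨m, n, hx'⟩ := hx'
  obtain ⟨m', n', hy'⟩ := hy'
  rw [hx] at hx'
  rw [hy] at hy'
  obtain ⟨⟨hre, him, -⟩, ⟨ha, hb, -⟩, -⟩ := hp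
  obtain ⟨⟨hre', him', -⟩, ⟨ha', hb', -⟩, -⟩ := hp'
  simp only [Zsqrtd.ext_iff, Zsqrtd.re_mul, Zsqrtd.im_mul, Zsqrtd.re_natCast,
    Zsqrtd.im_natCast] at hx' hy' ⊢
  have := mul_pos (Nat.cast_pos (α := ℤ).2 ha) hre
  have := mul_pos (Nat.cast_pos (α := ℤ).2 hb) hre
  have := mul_pos (Nat.cast_pos (α := ℤ).2 ha') hre'
  have := mul_pos (Nat.cast_pos (α := ℤ).2 hb') hre'
  have := mul_nonneg (Nat.cast_nonneg (α := ℤ) p.2.1) him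
  have := mul_nonneg (Nat.cast_nonneg (α := ℤ) p.2.2) him
  have := mul_nonneg (Nat.cast_nonneg (α := ℤ) p'.2.1) him'
  have := mul_nonneg (Nat.cast_nonneg (α := ℤ) p'.2.2) him'
  rcases Int.units_eq_one_or m with rfl | rfl <;> rcases Int.units_eq_one_or n with rfl | rfl <;>
  rcases Int.units_eq_one_or m' with rfl | rfl <;> rcases Int.units_eq_one_or n' with rfl | rfl <;>
  simp only [Units.val_one, Units.val_neg, one_mul, neg_mul, mul_neg, neg_neg] at hx' hy' <;>
  refine ⟨⟨?_, ?_⟩, ?_, ?_⟩ <;> linarith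

lemma injOn_parameterLattice : Set.InjOn parameterLattice rhombicParameters := by
  rintro ⟨z, a, b⟩ hp ⟨z', a', b'⟩ hp' h
  obtain ⟨ha, hb⟩ := diagonals_eq_of_parameterLattice_eq hp hp' h
  obtain ⟨rfl, rfl⟩ := eq_of_natCast_mul_eq hp.2.1.1 hp.1.2.2 hp'.1.2.2 ha
  obtain ⟨rfl, -⟩ := eq_of_natCast_mul_eq hp.2.1.2.1 hp.1.2.2 hp'.1.2.2 hb
  rfl

lemma exists_isCoprime_of_re_star_mul_eq_zero {z w : GaussianInt} (hz : z ≠ 0)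
    (h : (star z * w).re = 0) : ∃ (π : GaussianInt) (g k : ℤ), IsCoprime π.re π.im ∧
      z = g * π ∧ w = k * ((Zsqrtd.sqrtd : GaussianInt) * π) := by
  have hgcd : 0 < Int.gcd z.re z.im := by
    rw [Int.gcd_pos_iff]
    contrapose! hz
    exact Zsqrtd.ext hz.1 hz.2
  obtain ⟨p, q, hpq, hre, him⟩ := Int.exists_gcd_one hgcd
  have hg₀ : (Int.gcd z.re z.im : ℤ) ≠ 0 := mod_cast hgcd.ne'
  generalize (Int.gcd z.re z.im : ℤ) = g at hre him hg₀
  have horth : p * w.re + q * w.im = 0 := by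
    refine (mul_eq_zero.1 ?_).resolve_left hg₀
    simp only [Zsqrtd.re_mul, Zsqrtd.re_star, Zsqrtd.im_star, hre, him] at h
    linear_combination h
  obtain ⟨α, β, hαβ⟩ := Int.isCoprime_iff_gcd_eq_one.2 hpq
  refine ⟨⟨p, q⟩, g, α * w.im - β * w.re, ⟨α, β, hαβ⟩, ?_, ?_⟩ <;> ext <;>
    simp only [Zsqrtd.re_mul, Zsqrtd.im_mul, Zsqrtd.re_intCast, Zsqrtd.im_intCast,
      Zsqrtd.re_sqrtd, Zsqrtd.im_sqrtd]
  · linear_combination hre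
  · linear_combination him
  · linear_combination (-w.re) * hαβ + α * horth
  · linear_combination (-w.im) * hαβ + β * horth

lemma natAbs_mem_sector_one {g k : ℤ} (hg : g ≠ 0) (hk : k ≠ 0) (hgk : g ^ 2 ≤ 3 * k ^ 2)
    (hkg : k ^ 2 ≤ 3 * g ^ 2) : (g.natAbs, k.natAbs) ∈ sector 1 := by
  have hg' := Int.natAbs_pos.2 hg
  have hk' := Int.natAbs_pos.2 hk
  refine ⟨hg', hk', lt_of_le_of_ne ?_ (sq_ne_three_mul_sq hk'),
    lt_of_le_of_ne ?_ (sq_ne_three_mul_sq hg'), Nat.modEq_one⟩ <;> zify <;> simpa only [sq_abs]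

lemma norm_add_add_norm_sub (x y : GaussianInt) :
    (x + y).norm + (x - y).norm = 2 * (x.norm + y.norm) := by
  simp only [gaussianInt_norm_eq, Zsqrtd.re_add, Zsqrtd.im_add, Zsqrtd.re_sub, Zsqrtd.im_sub]
  ring

lemma re_star_add_mul_sub (x y : GaussianInt) :
    (star (x + y) * (x - y)).re = x.norm - y.norm := by
  simp only [gaussianInt_norm_eq, Zsqrtd.re_mul, Zsqrtd.re_star, Zsqrtd.im_star, Zsqrtd.re_add,
    Zsqrtd.im_add, Zsqrtd.re_sub, Zsqrtd.im_sub]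
  ring

variable {L : AddSubgroup GaussianInt}

/-- The diagonals of the rhombus spanned by two minimal vectors are orthogonal, and minimality says
that neither of them is shorter than the sides. -/
lemma exists_rhombicLattice_eq (hL : L ∈ wellRoundedLattices) :
    ∃ (π : GaussianInt) (g k : ℤ), IsCoprime π.re π.im ∧ (g.natAbs, k.natAbs) ∈ sector 1 ∧
      2 ∣ (⟨g, k⟩ : GaussianInt) * π ∧
      rhombicLattice (g * π) (k * ((Zsqrtd.sqrtd : GaussianInt) * π)) = L := by
  obtain ⟨x, y, hx, hy, hxy⟩ := isWellRounded_complexLattice_iff.1 hL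
  have hsum : x + y ≠ 0 := by
    rintro h
    obtain rfl := eq_neg_of_add_eq_zero_right h
    simp [mul_comm] at hxy
  have hdiff : x - y ≠ 0 := by
    rintro h
    obtain rfl := sub_eq_zero.1 h
    simp [mul_comm] at hxy
  have hN : x.norm = y.norm := le_antisymm (hx.2.2 y hy.1 hy.2.1) (hy.2.2 x hx.1 hx.2.1)
  have hsum_le := hx.2.2 _ (add_mem hx.1 hy.1) hsum
  have hdiff_le := hx.2.2 _ (sub_mem hx.1 hy.1) hdiff
  have hadd := norm_add_add_norm_sub x y
  obtain ⟨π, g, k, hπ, hg, hk⟩ := exists_isCoprime_of_re_star_mul_eq_zero hsum <|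
    (re_star_add_mul_sub x y).trans (sub_eq_zero.2 hN)
  have hgN : (x + y).norm = g ^ 2 * π.norm := by
    rw [hg, Zsqrtd.norm_mul, Zsqrtd.norm_intCast, sq]
  have hkN : (x - y).norm = k ^ 2 * π.norm := by
    rw [hk, Zsqrtd.norm_mul, Zsqrtd.norm_mul, Zsqrtd.norm_intCast, sq]
    simp [Zsqrtd.norm_def]
  have hπN : 0 < π.norm := GaussianInt.norm_pos.2 fun h ↦ by simp [hg, h] at hsum
  refine ⟨π, g, k, hπ, natAbs_mem_sector_one ?_ ?_ ?_ ?_, ⟨x, ?_⟩, ?_⟩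
  · rintro rfl
    simp [hg] at hsum
  · rintro rfl
    simp [hk] at hdiff
  · exact le_of_mul_le_mul_right (by linarith) hπN
  · exact le_of_mul_le_mul_right (by linarith) hπN
  · rw [mk_mul_eq g k, ← hg, ← hk]
    ring
  · rw [← hg, ← hk, rhombicLattice_add_sub, eq_closure_pair_of_isMinimalVector hx hy hxy]

lemma rhombicLattice_natAbs_mul (g k : ℤ) (z w : GaussianInt) :
    rhombicLattice (g.natAbs * z) (k.natAbs * w) = rhombicLattice (g * z) (k * w) := by
  have natAbs_mul (l : ℤ) (v : GaussianInt) :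
      (l.natAbs : GaussianInt) * v = l * v ∨ (l.natAbs : GaussianInt) * v = -(l * v) := by
    rw [← Int.cast_natCast]
    rcases Int.natAbs_eq l with h | h
    · exact .inl (by rw [← h])
    · exact .inr (by rw [← neg_mul, ← Int.cast_neg, eq_comm, neg_eq_iff_eq_neg.2 h])
  rcases natAbs_mul g z with hg | hg <;> rcases natAbs_mul k w with hk | hk <;>
    simp only [hg, hk, rhombicLattice_neg_left, rhombicLattice_neg_right]

lemma two_dvd_natAbs_mk_mul {g k : ℤ} {z : GaussianInt} (h : 2 ∣ (⟨g, k⟩ : GaussianInt) * z) :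
    2 ∣ (⟨g.natAbs, k.natAbs⟩ : GaussianInt) * z := by
  have hdvd : ((2 : ℤ) : GaussianInt) ∣ ⟨g.natAbs, k.natAbs⟩ - ⟨g, k⟩ := by
    rw [Zsqrtd.intCast_dvd, Zsqrtd.re_sub, Zsqrtd.im_sub]
    constructor <;> dsimp only <;> omega
  simpa only [← add_mul, add_sub_cancel] using dvd_add h (dvd_mul_of_dvd_left hdvd z)

lemma exists_parameterLattice_eq (hL : L ∈ wellRoundedLattices) :
    ∃ p ∈ rhombicParameters, parameterLattice p = L := by
  obtain ⟨z, g, k, hz, hgk, hdvd, hL⟩ := exists_rhombicLattice_eq hL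
  obtain ⟨w, hre, him, hw, g', k', hgk', hdvd', hL'⟩ := exists_mem_quadrant
    (P := fun π ↦ IsCoprime π.re π.im ∧ ∃ g k : ℤ, (g.natAbs, k.natAbs) ∈ sector 1 ∧
      2 ∣ (⟨g, k⟩ : GaussianInt) * π ∧
      rhombicLattice (g * π) (k * ((Zsqrtd.sqrtd : GaussianInt) * π)) = L)
    (fun π ⟨hπ, g, k, ⟨hg, hk, hgk, hkg, _⟩, hdvd, hL⟩ ↦ by
      refine ⟨by simpa using hπ.symm.neg_left, k, -g, ?_, ?_, ?_⟩
      · rw [Int.natAbs_neg]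
        exact ⟨hk, hg, hkg, hgk, Nat.modEq_one⟩
      · convert hdvd using 1
        ext <;> simp <;> ring
      · rw [← hL, rhombicLattice_comm (g * π)]
        congr 1
        ext <;> simp)
    (fun h ↦ by simp [h, isCoprime_zero_left] at hz) ⟨hz, g, k, hgk, hdvd, hL⟩
  exact ⟨(w, g'.natAbs, k'.natAbs), ⟨⟨hre, him, hw⟩, hgk', two_dvd_natAbs_mk_mul hdvd'⟩,
    (rhombicLattice_natAbs_mul _ _ _ _).trans hL'⟩

lemma bijOn_parameterLattice :
    Set.BijOn parameterLattice rhombicParameters wellRoundedLattices :=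
  ⟨fun _ ↦ parameterLattice_mem_wellRoundedLattices, injOn_parameterLattice,
    fun _ ↦ exists_parameterLattice_eq⟩

end RhombicLattices

/-! ### The Dirichlet series -/

section DirichletSeries

variable {s : ℝ}

lemma squareLattice_eq_complexLattice_top : squareLattice = complexLattice ⊤ := by
  apply le_antisymm
  · refine (AddSubgroup.closure_le _).2 ?_
    rintro _ (rfl | rfl)
    · exact ⟨1, trivial, by simp⟩
    · exact ⟨Zsqrtd.sqrtd, trivial, by simp [GaussianInt.toComplex_def]⟩
  · rintro _ ⟨z, -, rfl⟩
    rw [squareLattice, AddSubgroup.mem_closure_pair]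
    exact ⟨z.re, z.im, by simp [GaussianInt.toComplex_def]⟩

lemma index_addSubgroupOf_squareLattice (L : AddSubgroup GaussianInt) :
    ((complexLattice L).addSubgroupOf squareLattice).index = L.index := by
  have hinj : Function.Injective GaussianInt.toComplex.toAddMonoidHom :=
    fun _ _ ↦ GaussianInt.toComplex_inj.1
  rw [squareLattice_eq_complexLattice_top, ← AddSubgroup.relIndex, complexLattice, complexLattice,
    AddSubgroup.relIndex_map_map_of_injective _ _ hinj, AddSubgroup.relIndex_top_right]

lemma aSquare_eq_card (n : ℕ) :
    aSquare n = Nat.card {L : wellRoundedLattices // L.1.index = n} := by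
  have hinj : Function.Injective complexLattice :=
    AddSubgroup.map_injective fun _ _ ↦ GaussianInt.toComplex_inj.1
  have hle (L : AddSubgroup GaussianInt) : complexLattice L ≤ squareLattice := by
    rw [squareLattice_eq_complexLattice_top]
    exact AddSubgroup.map_mono le_top
  refine (Nat.card_congr (Equiv.ofBijective (fun L ↦ ⟨complexLattice L.1.1, hle _, L.1.2,
    (index_addSubgroupOf_squareLattice _).trans L.2⟩) ⟨fun L L' h ↦ ?_, ?_⟩)).symm
  · exact Subtype.ext (Subtype.ext (hinj (congrArg Subtype.val h)))
  · rintro ⟨Λ, hΛ, hwr, hn⟩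
    rw [squareLattice_eq_complexLattice_top] at hΛ
    obtain ⟨L, rfl⟩ : ∃ L, complexLattice L = Λ :=
      ⟨_, AddSubgroup.map_comap_eq_self (hΛ.trans (AddSubgroup.map_le_range _ _))⟩
    rw [index_addSubgroupOf_squareLattice] at hn
    exact ⟨⟨⟨L, hwr⟩, hn⟩, rfl⟩

lemma two_dvd_mk_mul_iff {z : GaussianInt} (hz : IsCoprime z.re z.im) {a b : ℕ} :
    2 ∣ (⟨a, b⟩ : GaussianInt) * z ↔
      (Even a ∧ Even b) ∨ (Even z.norm.natAbs ∧ a ≡ b [MOD 2]) := by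
  have hodd : ¬(Even z.re ∧ Even z.im) := fun h ↦ by
    have := hz.isUnit_of_dvd' h.1.two_dvd h.2.two_dvd
    norm_num [Int.isUnit_iff] at this
  have hmod : a ≡ b [MOD 2] ↔ (Even a ↔ Even b) := by
    rw [Nat.ModEq, Nat.even_iff, Nat.even_iff]
    omega
  have htwo := Zsqrtd.intCast_dvd (d := -1) 2 ((⟨a, b⟩ : GaussianInt) * z)
  simp only [Int.cast_ofNat] at htwo
  rw [htwo, hmod, gaussianInt_norm_eq, Int.natAbs_even, ← even_iff_two_dvd, ← even_iff_two_dvd]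
  simp only [Zsqrtd.re_mul, Zsqrtd.im_mul, neg_mul, one_mul, Int.even_add, Int.even_mul,
    even_neg, Int.even_pow' two_ne_zero, Int.even_coe_nat]
  grind

lemma mem_image_two_nsmul_sector_one {q : ℕ × ℕ} :
    q ∈ (2 • ·) '' sector 1 ↔ q ∈ sector 1 ∧ Even q.1 ∧ Even q.2 := by
  have two_nsmul_mem (a b : ℕ) : (2 * a, 2 * b) ∈ sector 1 ↔ (a, b) ∈ sector 1 := by
    simp only [sector, Set.mem_ofPred_eq, Nat.modEq_one, mul_pow]
    grind
  constructor
  · rintro ⟨⟨a, b⟩, h, rfl⟩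
    exact ⟨(two_nsmul_mem a b).2 h, even_two_mul a, even_two_mul b⟩
  · obtain ⟨a, b⟩ := q
    rintro ⟨h, ha, hb⟩
    obtain ⟨c, rfl⟩ := ha.two_dvd
    obtain ⟨d, rfl⟩ := hb.two_dvd
    exact ⟨(c, d), (two_nsmul_mem c d).1 h, rfl⟩

lemma mem_sector_two {q : ℕ × ℕ} : q ∈ sector 2 ↔ q ∈ sector 1 ∧ q.1 ≡ q.2 [MOD 2] := by
  simp only [sector, Set.mem_ofPred_eq, Nat.modEq_one]
  tauto

lemma rhombicParameters_eq : rhombicParameters =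
    ((primitiveQuadrant ∩ {z | z.norm.natAbs ∈ {n | Odd n}}) ×ˢ ((2 • ·) '' sector 1)) ∪
      ((primitiveQuadrant ∩ {z | z.norm.natAbs ∈ {n | Even n}}) ×ˢ sector 2) := by
  ext ⟨z, a, b⟩
  simp only [rhombicParameters, Set.mem_ofPred_eq, Set.mem_union, Set.mem_prod, Set.mem_inter_iff,
    mem_image_two_nsmul_sector_one, mem_sector_two, ← Nat.not_even_iff_odd]
  constructor
  · rintro ⟨hz, hq, h⟩
    rw [two_dvd_mk_mul_iff hz.2.2] at h
    have (ha : Even a) (hb : Even b) : a ≡ b [MOD 2] := by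
      rw [Nat.ModEq, Nat.even_iff.1 ha, Nat.even_iff.1 hb]
    tauto
  · rintro (⟨⟨hz, -⟩, hq, h⟩ | ⟨⟨hz, h⟩, hq, h'⟩)
    · exact ⟨hz, hq, (two_dvd_mk_mul_iff hz.2.2).2 (.inl h)⟩
    · exact ⟨hz, hq, (two_dvd_mk_mul_iff hz.2.2).2 (.inr ⟨h, h'⟩)⟩

lemma hasSum_prod_mul_of_nonneg {α β : Type*} {A : Set α} {B : Set β} {f : α → ℝ} {g : β → ℝ}
    (hf₀ : 0 ≤ f) (hg₀ : 0 ≤ g) {S T : ℝ} (hf : HasSum (fun a : A ↦ f a) S)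
    (hg : HasSum (fun b : B ↦ g b) T) :
    HasSum (fun p : ↥(A ×ˢ B) ↦ f p.1.1 * g p.1.2) (S * T) :=
  ((Equiv.Set.prod A B).hasSum_iff (f := fun p : A × B ↦ f p.1 * g p.2)).2 <| hf.mul hg <|
    hf.summable.mul_of_nonneg hg.summable (fun a ↦ hf₀ a) (fun b ↦ hg₀ b)

lemma hasSum_image_two_nsmul_sector_one (hs : 1 < s) :
    HasSum (fun q : ↥((2 • ·) '' sector 1) ↦ ((q.1.1 * q.1.2 : ℕ) : ℝ) ^ (-s))
      (4 ^ (-s) * sectorSum s 1) := by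
  have hinj : Function.Injective fun q : ℕ × ℕ ↦ 2 • q := nsmul_right_injective two_ne_zero
  rw [← (Equiv.Set.image _ (sector 1) hinj).hasSum_iff]
  refine ((hasSum_sectorSum hs one_pos).mul_left _).congr_fun fun q ↦ ?_
  rw [← Real.mul_rpow (by norm_num) (by positivity)]
  simp only [Equiv.Set.image_apply, Function.comp_apply, Prod.smul_fst, Prod.smul_snd, smul_eq_mul]
  push_cast
  ring_nf

lemma index_parameterLattice_rpow_neg {p : GaussianInt × ℕ × ℕ} (hp : p ∈ rhombicParameters) :
    ((parameterLattice p).index : ℝ) ^ (-s) =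
      2 ^ s * ((p.1.norm.natAbs : ℝ) ^ (-s) * ((p.2.1 * p.2.2 : ℕ) : ℝ) ^ (-s)) := by
  have h := congrArg (fun n : ℕ ↦ (n : ℝ) ^ (-s)) (two_mul_index_parameterLattice hp)
  rw [Nat.cast_mul, Nat.cast_mul _ p.1.norm.natAbs, Real.mul_rpow (by simp) (by simp),
    Real.mul_rpow (Nat.cast_nonneg _) (Nat.cast_nonneg _), Nat.cast_ofNat,
    Real.rpow_neg zero_le_two s] at h
  rw [mul_comm (_ ^ _) (_ ^ _), ← h]
  field_simp

lemma hasSum_index_parameterLattice (hs : 1 < s) :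
    HasSum (fun p : rhombicParameters ↦ ((parameterLattice p).index : ℝ) ^ (-s))
      (oddPrimitiveSeries s * (2 ^ (-s) * sectorSum s 1 + sectorSum s 2)) := by
  have hodd := hasSum_primitiveQuadrant_of_hasSum hs (hasSum_odd_sqrtNegOneFunction hs)
  have heven := hasSum_primitiveQuadrant_of_hasSum hs (hasSum_even_sqrtNegOneFunction hs)
  let f (z : GaussianInt) : ℝ := (z.norm.natAbs : ℝ) ^ (-s)
  let g (q : ℕ × ℕ) : ℝ := ((q.1 * q.2 : ℕ) : ℝ) ^ (-s)
  have hf : 0 ≤ f := fun z ↦ by positivity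
  have hg : 0 ≤ g := fun q ↦ by positivity
  have h₁ := hasSum_prod_mul_of_nonneg hf hg hodd (hasSum_image_two_nsmul_sector_one hs)
  have h₂ := hasSum_prod_mul_of_nonneg hf hg heven (hasSum_sectorSum hs two_pos)
  have hdisj : Disjoint
      ((primitiveQuadrant ∩ {z | z.norm.natAbs ∈ {n | Odd n}}) ×ˢ ((2 • ·) '' sector 1))
      ((primitiveQuadrant ∩ {z | z.norm.natAbs ∈ {n | Even n}}) ×ˢ sector 2) :=
    Set.disjoint_left.2 fun p h h' ↦ Nat.not_even_iff_odd.2 h.1.2 h'.1.2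
  have hunion := HasSum.add_disjoint (f := fun p : GaussianInt × ℕ × ℕ ↦ f p.1 * g p.2) hdisj h₁ h₂
  rw [← rhombicParameters_eq] at hunion
  have hfour : (4 : ℝ) ^ (-s) = 2 ^ (-s) * 2 ^ (-s) := by
    rw [← Real.mul_rpow zero_le_two zero_le_two]
    norm_num
  have hval : oddPrimitiveSeries s * (2 ^ (-s) * sectorSum s 1 + sectorSum s 2) =
      2 ^ s * (oddPrimitiveSeries s * (4 ^ (-s) * sectorSum s 1) +
        2 ^ (-s) * oddPrimitiveSeries s * sectorSum s 2) := by
    rw [hfour, Real.rpow_neg zero_le_two]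
    field_simp
  rw [hval]
  exact (hunion.mul_left _).congr_fun fun p ↦ index_parameterLattice_rpow_neg p.2

lemma hasSum_aSquare (hs : 1 < s) :
    HasSum (fun n : ℕ ↦ aSquare n * (n : ℝ) ^ (-s))
      (oddPrimitiveSeries s * (2 ^ (-s) * sectorSum s 1 + sectorSum s 2)) := by
  simp only [aSquare_eq_card]
  exact hasSum_card_fiber_mul (fun L : wellRoundedLattices ↦ L.1.index)
    ((bijOn_parameterLattice.equiv).hasSum_iff.1 (hasSum_index_parameterLattice hs))

lemma zetaReal_pos (hs : 1 < s) : 0 < zetaReal s :=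
  (summable_rpow_neg hs).tsum_pos (fun n ↦ by positivity) 1 (by simp)

lemma DSquare_eq (hs : 1 < s) : DSquare s =
    oddPrimitiveSeries s * ((1 + 2 * 2 ^ (-s)) * (sectorIntegral s * zetaReal (2 * s - 1))) := by
  have hζ : 0 < zetaReal (2 * s) := zetaReal_pos (by linarith)
  have hP : LFour s / zetaReal (2 * s) * zetaReal s = oddPrimitiveSeries s * (1 + 2 ^ (-s)) := by
    rw [div_mul_eq_mul_div, div_eq_iff hζ.ne', oddPrimitiveSeries_mul_zetaReal hs, mul_comm]
  calc DSquare s = (2 + 2 ^ s) / (1 + 2 ^ s) * sectorIntegral s *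
        (LFour s / zetaReal (2 * s) * zetaReal s) * zetaReal (2 * s - 1) := by
        rw [DSquare, sectorIntegral_eq hs.ne']
        ring
    _ = _ := by
        rw [hP, Real.rpow_neg zero_le_two]
        field_simp
        ring

end DirichletSeries

theorem wellRounded_square_dirichlet_series_bounds :
    ∀ s : ℝ, 1 < s →
      Summable (fun n : ℕ => (aSquare n : ℝ) * (n : ℝ) ^ (-s)) ∧
      DSquare s - zetaReal s * LFour s < ∑' n : ℕ, (aSquare n : ℝ) * (n : ℝ) ^ (-s) ∧
      ∑' n : ℕ, (aSquare n : ℝ) * (n : ℝ) ^ (-s) < DSquare s + zetaReal s * LFour s := by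
  intro s hs
  have hΦ := hasSum_aSquare hs
  have hP := oddPrimitiveSeries_pos hs
  obtain ⟨hlow₁, hupp₁⟩ := mul_sectorSum_mem_Ioo hs one_pos
  obtain ⟨hlow₂, hupp₂⟩ := mul_sectorSum_mem_Ioo hs two_pos
  push_cast at hlow₁ hupp₁ hlow₂ hupp₂
  have htwo : (0 : ℝ) < 2 ^ (-s) := by positivity
  rw [hΦ.tsum_eq, DSquare_eq hs, ← oddPrimitiveSeries_mul_zetaReal hs, mul_assoc, ← mul_sub,
    ← mul_add]
  refine ⟨hΦ.summable, mul_lt_mul_of_pos_left ?_ hP, mul_lt_mul_of_pos_left ?_ hP⟩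
  · linarith [mul_lt_mul_of_pos_left hlow₁ htwo]
  · linarith [mul_lt_mul_of_pos_left hupp₁ htwo]
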